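/- arXiv:1912.02266 — 3 statements merged into one kernel-verified Lean document; each statement's English description precedes it below -/
import Mathlib

section
/- Let r ≥ 2 and let p_{r,k} = N^B_k(θ_B) be the number of decompositions of the highest root θ_B = (1,2,2,…,2) ∈ ℕ^r of B_r as a sum of exactly k positive roots. Let μ_r = (Σ_k k·p_{r,k})/(Σ_k p_{r,k}) and σ_r² = (Σ_k k²·p_{r,k})/(Σ_k p_{r,k}) − μ_r². Then μ_r = [ (5−√5+(25−13√5)r)(5−√5)^r + (5+√5+(25+13√5)r)(5+√5)^r ] / ( 5·[ (5−3√5)(5−√5)^r + (5+3√5)(5+√5)^r ] ) and σ_r² = { 20^{r+1}r² + [ 26(3√5−7)(5−√5)^{2r} − 26(3√5+7)(5+√5)^{2r} + (36/5)·20^{r+1} ]·r + 2(73−25√5)(5−√5)^{2r} + 2(73+25√5)(5+√5)^{2r} − (63/5)·20^{r+1} } / ( −5·[ (5−3√5)(5−√5)^r + (5+3√5)(5+√5)^r ]² ). -/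
open Polynomial

/-- The positive roots of the Lie algebra of type `B_r` in simple-root coordinates
(`1`-based positions): the interval vectors `α[i,j]` for `1 ≤ i ≤ j ≤ r`, together with
the vectors `β[i,j]` (value `1` at positions `i..j−1`, value `2` at positions `j..r`)
for `1 ≤ i < j ≤ r`. -/
def isPosRootB (r : ℕ) (v : Fin r → ℕ) : Prop :=
  (∃ i j : ℕ, 1 ≤ i ∧ i ≤ j ∧ j ≤ r ∧
    v = fun t => if i ≤ t.val + 1 ∧ t.val + 1 ≤ j then 1 else 0) ∨
  (∃ i j : ℕ, 1 ≤ i ∧ i < j ∧ j ≤ r ∧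
    v = fun t => if i ≤ t.val + 1 ∧ t.val + 1 ≤ j - 1 then 1
      else if j ≤ t.val + 1 then 2 else 0)

/-- `NB r k λ` is the number of decompositions of the weight `λ` as a sum of exactly `k`
positive roots of `B_r`. -/
noncomputable def NB (r k : ℕ) (lam : Fin r → ℕ) : ℕ :=
  Set.ncard {m : (Fin r → ℕ) →₀ ℕ |
    (∀ v ∈ m.support, isPosRootB r v) ∧
    (m.sum fun _ n => n) = k ∧
    (m.sum fun v n => n • v) = lam}

/-- The highest root `θ_B = (1,2,2,…,2)` of `B_r` in simple-root coordinates. -/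
def thetaB (r : ℕ) : Fin r → ℕ := fun t => if t.val = 0 then 1 else 2

/-- `pB r k` is the number of decompositions of the highest root of `B_r` as a sum of
exactly `k` positive roots (as a real number). -/
noncomputable def pB (r k : ℕ) : ℝ := (NB r k (thetaB r) : ℝ)

/-- The mean number of positive roots used in the decompositions of the highest root of
`B_r`, each decomposition being equally likely. -/
noncomputable def muB (r : ℕ) : ℝ := (∑' k : ℕ, (k : ℝ) * pB r k) / ∑' k : ℕ, pB r k

/-- The variance of the number of positive roots used in the decompositions of the
highest root of `B_r`. -/
noncomputable def varB (r : ℕ) : ℝ :=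
  (∑' k : ℕ, (k : ℝ) ^ 2 * pB r k) / (∑' k : ℕ, pB r k) - muB r ^ 2

/-!
Since `β[i,j] = α[i,r] + α[j,r]`, a decomposition of `θ_B` amounts to a cover of the positions
`1, …, r` with multiplicities `1, 2, …, 2` by intervals, exactly two of which reach `r`; if these
two start at different positions, they may be fused into a single `β[i,j]` or not. Read from left
to right, such a cover consists of two strands, each of which either continues or is cut and
reopened at every step. The only information to be remembered is whether the two strands have the
same starting point, because two strands with the same starting point are interchangeable.

The generating polynomials of these two kinds of configurations evolve by a `2 × 2` matrix, so that
those of the decompositions of `θ_B` satisfy a linear recurrence of order two. At `1`, it and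
its derivatives become recurrences for the number of decompositions and its first two moments, all
governed by the roots `(5 ± √5) / 2` of `x² = 5x - 5`.
-/

section Moments

variable (p : ℝ[X])

lemma tsum_coeff : ∑' k, p.coeff k = p.eval 1 := by
  rw [tsum_eq_sum (s := p.support) fun k hk => notMem_support_iff.1 hk, eval_eq_sum]
  simp [Polynomial.sum]

lemma coeff_X_mul_derivative (k : ℕ) : (X * derivative p).coeff k = k * p.coeff k := by
  cases k with
  | zero => simp
  | succ k => simp [coeff_X_mul, coeff_derivative, mul_comm]

lemma tsum_mul_coeff : ∑' k : ℕ, (k : ℝ) * p.coeff k = (derivative p).eval 1 := by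
  simp only [← coeff_X_mul_derivative, tsum_coeff, eval_mul, eval_X, one_mul]

lemma tsum_sq_mul_coeff :
    ∑' k : ℕ, (k : ℝ) ^ 2 * p.coeff k = (derivative (X * derivative p)).eval 1 := by
  rw [← tsum_mul_coeff]
  simp only [coeff_X_mul_derivative, sq, mul_assoc]

end Moments

section GenPoly

variable {σ τ : Type*} {w : σ → ℕ} {A B : Set σ}

/-- The generating polynomial of a set `A` graded by `w`, as a `finsum`: it is `0` by convention
when `A` is infinite. -/
noncomputable def genPoly (w : σ → ℕ) (A : Set σ) : ℝ[X] := ∑ᶠ x ∈ A, X ^ w x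

lemma coeff_genPoly (hA : A.Finite) (k : ℕ) :
    (genPoly w A).coeff k = ({x ∈ A | w x = k}.ncard : ℝ) := by
  classical
  have hfilter : {x ∈ A | w x = k} = ↑{x ∈ hA.toFinset | w x = k} := by ext; simp
  rw [hfilter, Set.ncard_coe_finset, genPoly, finsum_mem_eq_finite_toFinset_sum _ hA,
    finsetSum_coeff, Finset.card_filter]
  simp [coeff_X_pow, eq_comm]

lemma genPoly_singleton (x : σ) : genPoly w {x} = X ^ w x := finsum_mem_singleton

lemma genPoly_union (hAB : Disjoint A B) (hA : A.Finite) (hB : B.Finite) :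
    genPoly w (A ∪ B) = genPoly w A + genPoly w B :=
  finsum_mem_union hAB hA hB

lemma genPoly_image {v : τ → ℕ} {f : σ → τ} {c : ℕ} (hf : A.InjOn f)
    (hvw : ∀ x ∈ A, v (f x) = w x + c) : genPoly v (f '' A) = X ^ c * genPoly w A := by
  rw [genPoly, genPoly, finsum_mem_image hf, mul_finsum_mem]
  exact finsum_mem_congr rfl fun x hx => by rw [hvw x hx, pow_add, mul_comm]

end GenPoly

lemma bijOn_multisetMap {ι V : Type*} [Nonempty ι] {f : ι → V} {s : Set ι} {t : Set V}
    (hf : Set.BijOn f s t) :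
    Set.BijOn (Multiset.map f) {M | ∀ i ∈ M, i ∈ s} {N | ∀ v ∈ N, v ∈ t} := by
  obtain ⟨hleft, hright⟩ := hf.invOn_invFunOn
  refine Set.InvOn.bijOn (f' := Multiset.map (Function.invFunOn f s)) ⟨?_, ?_⟩ ?_ ?_
  · intro M hM
    rw [Multiset.map_map]
    exact (Multiset.map_congr rfl fun i hi => hleft (hM i hi)).trans M.map_id
  · intro N hN
    rw [Multiset.map_map]
    exact (Multiset.map_congr rfl fun v hv => hright (hN v hv)).trans N.map_id
  · intro M hM
    simpa using fun i hi => hf.mapsTo (hM i hi)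
  · intro N hN
    simpa using fun v hv => hf.surjOn.mapsTo_invFunOn (hN v hv)

lemma ncard_finsupp_eq_ncard_multiset {ι V : Type*} [Nonempty ι] [AddCommMonoid V]
    {f : ι → V} {s : Set ι} {t : Set V} (hf : Set.BijOn f s t) (k : ℕ) (lam : V) :
    {m : V →₀ ℕ | (∀ v ∈ m.support, v ∈ t) ∧ (m.sum fun _ n => n) = k ∧
      (m.sum fun v n => n • v) = lam}.ncard =
    {M : Multiset ι | ((∀ i ∈ M, i ∈ s) ∧ (M.map f).sum = lam) ∧ M.card = k}.ncard := by
  classical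
  have hmap := bijOn_multisetMap hf
  refine (Set.BijOn.ncard_eq (f := fun M => Multiset.toFinsupp (M.map f)) ⟨?_, ?_, ?_⟩).symm
  · rintro M ⟨⟨hM, hsum⟩, hcard⟩
    refine ⟨?_, ?_, ?_⟩
    · simpa using hmap.mapsTo hM
    · rw [← hcard, ← Multiset.card_map f, ← Multiset.toFinsupp_sum_eq]; rfl
    · rw [← hsum, ← Finsupp.sum_toMultiset, Multiset.toFinsupp_toMultiset]
  · intro M hM N hN h
    exact hmap.injOn hM.1.1 hN.1.1 (Multiset.toFinsupp.injective h)
  · rintro m ⟨hm, hcard, hsum⟩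
    obtain ⟨M, hM, hMm⟩ := hmap.surjOn (a := Finsupp.toMultiset m) (by simpa using hm)
    refine ⟨M, ⟨⟨hM, ?_⟩, ?_⟩, ?_⟩
    · rw [hMm, ← hsum, Finsupp.sum_toMultiset]
    · rw [← Multiset.card_map f, hMm, Finsupp.card_toMultiset, ← hcard]; rfl
    · simp [hMm]

/-- Labels of the positive roots of type `B`: `alpha (i, j)` stands for `α[i,j]` and
`beta (i, j)` for `β[i,j]`. -/
inductive RootLabel
  | alpha (p : ℕ × ℕ)
  | beta (p : ℕ × ℕ)

namespace RootLabel

/-- The labels that denote a root of `B_r`. -/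
def IsValid (r : ℕ) : RootLabel → Prop
  | alpha (i, j) => 1 ≤ i ∧ i ≤ j ∧ j ≤ r
  | beta (i, j) => 1 ≤ i ∧ i < j ∧ j ≤ r

/-- The coefficient of the simple root `α_s` in a labelled root. That of `β[i,j]` is written
through the identity `β[i,j] = α[i,r] + α[j,r]`. -/
def coeff : RootLabel → ℕ → ℕ
  | alpha (i, j), s => if i ≤ s ∧ s ≤ j then 1 else 0
  | beta (i, j), s => (if i ≤ s then 1 else 0) + if j ≤ s then 1 else 0

/-- The root of `B_r` denoted by a label, in simple-root coordinates. -/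
def toVec (r : ℕ) (l : RootLabel) : Fin r → ℕ := fun t => l.coeff (t + 1)

lemma toVec_eq_iff {r : ℕ} {l l' : RootLabel} :
    l.toVec r = l'.toVec r ↔ ∀ s, 1 ≤ s → s ≤ r → l.coeff s = l'.coeff s := by
  rw [funext_iff, Fin.forall_iff]
  refine ⟨fun h s hs hsr => ?_, fun h i hi => h (i + 1) (by lia) hi⟩
  simpa only [toVec, Nat.sub_add_cancel hs] using h (s - 1) (by lia)

lemma injOn_toVec (r : ℕ) : Set.InjOn (toVec r) {l | l.IsValid r} := by
  -- The coefficients at `r` and at the four endpoints already separate two labels.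
  rintro (⟨i, j⟩ | ⟨i, j⟩) hl (⟨i', j'⟩ | ⟨i', j'⟩) hl' h <;>
    rw [toVec_eq_iff] at h <;>
    simp only [coeff, IsValid, Set.mem_ofPred_eq, alpha.injEq, beta.injEq, reduceCtorEq,
      Prod.mk.injEq] at h hl hl' ⊢ <;>
    have hi := h i (by lia) (by lia) <;>
    have hi' := h i' (by lia) (by lia) <;>
    have hj := h j (by lia) (by lia) <;>
    have hj' := h j' (by lia) (by lia) <;>
    have hr := h r (by lia) (by lia) <;>
    clear h <;>
    grind

lemma isPosRootB_iff_exists_toVec {r : ℕ} {v : Fin r → ℕ} :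
    isPosRootB r v ↔ ∃ l : RootLabel, l.IsValid r ∧ l.toVec r = v := by
  have toVec_beta {i j : ℕ} (hij : i < j) : (beta (i, j)).toVec r = fun t =>
      if i ≤ t.val + 1 ∧ t.val + 1 ≤ j - 1 then 1 else if j ≤ t.val + 1 then 2 else 0 := by
    ext t
    simp only [toVec, coeff]
    grind
  constructor
  · rintro (⟨i, j, hi, hij, hj, rfl⟩ | ⟨i, j, hi, hij, hj, rfl⟩)
    · exact ⟨alpha (i, j), ⟨hi, hij, hj⟩, rfl⟩
    · exact ⟨beta (i, j), ⟨hi, hij, hj⟩, toVec_beta hij⟩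
  · rintro ⟨⟨i, j⟩ | ⟨i, j⟩, ⟨hi, hij, hj⟩, rfl⟩
    · exact Or.inl ⟨i, j, hi, hij, hj, rfl⟩
    · exact Or.inr ⟨i, j, hi, hij, hj, toVec_beta hij⟩

lemma bijOn_toVec (r : ℕ) : Set.BijOn (toVec r) {l | l.IsValid r} {v | isPosRootB r v} :=
  ⟨fun l hl => isPosRootB_iff_exists_toVec.2 ⟨l, hl, rfl⟩, injOn_toVec r,
    fun _ hv => isPosRootB_iff_exists_toVec.1 hv⟩

instance : Nonempty RootLabel := ⟨alpha 0⟩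

end RootLabel

/-- The coefficient of `α_s` in `θ_B = (1,2,2,…)`, with the indices `s` counted from `1`. -/
def thetaCoeff (s : ℕ) : ℕ := if s = 1 then 1 else 2

/-- The decompositions of the highest root of `B_r` into positive roots, as multisets of labels. -/
def thetaDecomps (r : ℕ) : Set (Multiset RootLabel) :=
  {M | (∀ l ∈ M, l.IsValid r) ∧ ∀ s ∈ Set.Icc 1 r, (M.map (·.coeff s)).sum = thetaCoeff s}

lemma sum_map_toVec_eq_thetaB_iff {r : ℕ} {M : Multiset RootLabel} :
    (M.map (·.toVec r)).sum = thetaB r ↔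
      ∀ s ∈ Set.Icc 1 r, (M.map (·.coeff s)).sum = thetaCoeff s := by
  have sum_apply (t : Fin r) :
      (M.map (·.toVec r)).sum t = (M.map (·.coeff (t + 1))).sum := by
    rw [Pi.multiset_sum_apply, Multiset.map_map]; rfl
  simp only [funext_iff, Fin.forall_iff, sum_apply, Set.mem_Icc, and_imp]
  refine ⟨fun h s hs hsr => ?_, fun h i hi => ?_⟩
  · rw [← Nat.sub_add_cancel hs, h (s - 1) (by lia)]
    simp [thetaB, thetaCoeff]
  · rw [h (i + 1) (by lia) hi]
    simp [thetaB, thetaCoeff]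

lemma NB_thetaB (r k : ℕ) : NB r k (thetaB r) = {M ∈ thetaDecomps r | M.card = k}.ncard := by
  unfold thetaDecomps
  simp only [Set.mem_ofPred_eq, ← sum_map_toVec_eq_thetaB_iff]
  exact ncard_finsupp_eq_ncard_multiset (RootLabel.bijOn_toVec r) k (thetaB r)

/-- The number of intervals `[i, j]` of `R` containing `s`. -/
def coverage (R : Multiset (ℕ × ℕ)) (s : ℕ) : ℕ := R.countP fun p => p.1 ≤ s ∧ s ≤ p.2

lemma coverage_zero (s : ℕ) : coverage 0 s = 0 := rfl

lemma coverage_cons (p : ℕ × ℕ) (R : Multiset (ℕ × ℕ)) (s : ℕ) :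
    coverage (p ::ₘ R) s = coverage R s + if p.1 ≤ s ∧ s ≤ p.2 then 1 else 0 :=
  Multiset.countP_cons ..

lemma coverage_eq_zero_iff {R : Multiset (ℕ × ℕ)} {s : ℕ} :
    coverage R s = 0 ↔ ∀ p ∈ R, ¬ (p.1 ≤ s ∧ s ≤ p.2) :=
  Multiset.countP_eq_zero

/-- A configuration of closed intervals together with two open strands, which start at `left`
and `right` and extend indefinitely to the right. -/
@[ext]
structure Strands where
  closed : Multiset (ℕ × ℕ)
  left : ℕ
  right : ℕ

namespace Strands

variable {t a b : ℕ} {R : Multiset (ℕ × ℕ)} {x : Strands}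

/-- The closed intervals end before `t`, both strands have started by `t`, and together they
cover the positions `1, …, t` with the multiplicities `1, 2, …, 2` of the highest root. -/
structure IsValid (t : ℕ) (x : Strands) : Prop where
  closed_lt : ∀ p ∈ x.closed, 1 ≤ p.1 ∧ p.1 ≤ p.2 ∧ p.2 < t
  left_mem : x.left ∈ Set.Icc 1 t
  right_mem : x.right ∈ Set.Icc 1 t
  cover : ∀ s ∈ Set.Icc 1 t,
    coverage x.closed s + (if x.left ≤ s then 1 else 0) + (if x.right ≤ s then 1 else 0) =
      thetaCoeff s

lemma isValid_swap : IsValid t ⟨R, b, a⟩ ↔ IsValid t ⟨R, a, b⟩ := by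
  suffices ∀ {a b}, IsValid t ⟨R, b, a⟩ → IsValid t ⟨R, a, b⟩ from ⟨this, this⟩
  rintro a b ⟨hclosed, hb, ha, hcover⟩
  exact ⟨hclosed, ha, hb, fun s hs => (add_right_comm ..).trans (hcover s hs)⟩

lemma isValid_succ_iff (ht : 2 ≤ t) (ha : a ≤ t) (hb : b ≤ t) :
    IsValid (t + 1) ⟨R, a, b⟩ ↔ IsValid t ⟨R, a, b⟩ := by
  constructor
  · rintro ⟨hclosed, ⟨ha₁, -⟩, ⟨hb₁, -⟩, hcover⟩
    have hRt : coverage R t = 0 := by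
      have := hcover t ⟨by lia, by lia⟩
      grind [thetaCoeff]
    rw [coverage_eq_zero_iff] at hRt
    exact ⟨fun p hp => by grind, ⟨ha₁, ha⟩, ⟨hb₁, hb⟩, fun s hs => hcover s ⟨hs.1, by grind⟩⟩
  · rintro ⟨hclosed, ⟨ha₁, -⟩, ⟨hb₁, -⟩, hcover⟩
    refine ⟨fun p hp => by grind, ⟨ha₁, by lia⟩, ⟨hb₁, by lia⟩, fun s hs => ?_⟩
    rcases hs.2.lt_or_eq with hst | rfl
    · exact hcover s ⟨hs.1, by lia⟩
    · have hR : coverage R (t + 1) = 0 := coverage_eq_zero_iff.2 fun p hp => by grind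
      grind [thetaCoeff]

-- Closing a strand at `t` and opening one at `t + 1` does not change any coverage.
lemma isValid_cons_iff (ha : a ∈ Set.Icc 1 t) :
    IsValid (t + 1) ⟨(a, t) ::ₘ R, b, t + 1⟩ ↔ IsValid (t + 1) ⟨R, b, a⟩ := by
  have hcover (s : ℕ) : coverage ((a, t) ::ₘ R) s + (if b ≤ s then 1 else 0) +
      (if t + 1 ≤ s then 1 else 0) =
      coverage R s + (if b ≤ s then 1 else 0) + (if a ≤ s then 1 else 0) := by
    rw [coverage_cons]
    grind
  constructor
  · rintro ⟨hclosed, hb, -, h⟩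
    exact ⟨fun p hp => hclosed p (Multiset.mem_cons_of_mem hp), hb, ⟨ha.1, by grind⟩,
      fun s hs => (hcover s).symm.trans (h s hs)⟩
  · rintro ⟨hclosed, hb, -, h⟩
    refine ⟨Multiset.forall_mem_cons.2 ⟨by grind, hclosed⟩, hb, by simp, fun s hs => ?_⟩
    exact (hcover s).trans (h s hs)

lemma exists_eq_cons_of_coverage_ne_zero (hR : ∀ p ∈ R, 1 ≤ p.1 ∧ p.1 ≤ p.2 ∧ p.2 < t + 1)
    (hRt : coverage R t ≠ 0) :
    ∃ a ∈ Set.Icc 1 t, ∃ R', R = (a, t) ::ₘ R' := by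
  rw [Ne, coverage_eq_zero_iff] at hRt
  push Not at hRt
  obtain ⟨⟨a, b⟩, hp, hat, htb⟩ := hRt
  obtain ⟨ha, -, hbt⟩ := hR _ hp
  obtain rfl : b = t := le_antisymm (Nat.le_of_lt_succ hbt) htb
  exact ⟨a, ⟨ha, hat⟩, Multiset.exists_cons_of_mem hp⟩

lemma IsValid.exists_eq_cons (ht : 2 ≤ t) (h : IsValid (t + 1) ⟨R, b, t + 1⟩) :
    ∃ a ∈ Set.Icc 1 t, ∃ R', R = (a, t) ::ₘ R' ∧ IsValid (t + 1) ⟨R', b, a⟩ := by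
  have hRt : coverage R t ≠ 0 := by
    have := h.cover t ⟨by lia, by lia⟩
    grind [thetaCoeff]
  obtain ⟨a, ha, R', rfl⟩ := exists_eq_cons_of_coverage_ne_zero h.closed_lt hRt
  exact ⟨a, ha, R', rfl, (isValid_cons_iff ha).1 h⟩

lemma isValid_two_iff_eq_zero : IsValid 2 ⟨R, 1, 2⟩ ↔ R = 0 := by
  constructor
  · rintro ⟨hclosed, -, -, hcover⟩
    have hR : coverage R 1 = 0 := by simpa [thetaCoeff] using hcover 1 (by simp)
    rw [coverage_eq_zero_iff] at hR
    exact Multiset.eq_zero_of_forall_notMem fun p hp => by grind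
  · rintro rfl
    refine ⟨by simp, by simp, by simp, fun s hs => ?_⟩
    rw [coverage_zero]
    grind [thetaCoeff]

lemma isValid_two_iff_eq_singleton : IsValid 2 ⟨R, 2, 2⟩ ↔ R = {(1, 1)} := by
  have h11 : 1 ∈ Set.Icc 1 1 := by simp
  constructor
  · intro h
    have hR : coverage R 1 ≠ 0 := by
      have := h.cover 1 (by simp)
      simp_all [thetaCoeff]
    obtain ⟨a, ⟨ha, ha'⟩, R', rfl⟩ := exists_eq_cons_of_coverage_ne_zero h.closed_lt hR
    obtain rfl : a = 1 := le_antisymm ha' ha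
    rw [isValid_cons_iff h11, isValid_swap, isValid_two_iff_eq_zero] at h
    rw [h]; rfl
  · rintro rfl
    exact (isValid_cons_iff h11).2 <| isValid_swap.2 <| isValid_two_iff_eq_zero.2 rfl

/-- The valid configurations up to `t` whose strands start at different positions, listed in
order. -/
def split (t : ℕ) : Set Strands := {x | x.IsValid t ∧ x.left < x.right}

/-- The valid configurations up to `t` whose strands start at the same position. -/
def parallel (t : ℕ) : Set Strands := {x | x.IsValid t ∧ x.left = x.right}

/-- Exchange of the two strands. -/
def swap (x : Strands) : Strands := ⟨x.closed, x.right, x.left⟩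

/-- Close the right strand at `t` and open a new one at `t + 1`. -/
def closeRight (t : ℕ) (x : Strands) : Strands := ⟨(x.right, t) ::ₘ x.closed, x.left, t + 1⟩

/-- Close both strands at `t` and open two new ones at `t + 1`. -/
def closeBoth (t : ℕ) (x : Strands) : Strands :=
  ⟨(x.left, t) ::ₘ (x.right, t) ::ₘ x.closed, t + 1, t + 1⟩

lemma split_two : split 2 = {⟨0, 1, 2⟩} := by
  ext ⟨R, a, b⟩
  simp only [split, Set.mem_ofPred_eq, Set.mem_singleton_iff, mk.injEq]
  constructor
  · rintro ⟨h, hab⟩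
    obtain ⟨rfl, rfl⟩ : a = 1 ∧ b = 2 := by grind [h.left_mem, h.right_mem]
    exact ⟨isValid_two_iff_eq_zero.1 h, rfl, rfl⟩
  · rintro ⟨rfl, rfl, rfl⟩
    exact ⟨isValid_two_iff_eq_zero.2 rfl, by simp⟩

lemma parallel_two : parallel 2 = {⟨{(1, 1)}, 2, 2⟩} := by
  ext ⟨R, a, b⟩
  simp only [parallel, Set.mem_ofPred_eq, Set.mem_singleton_iff, mk.injEq]
  constructor
  · rintro ⟨h, rfl⟩
    obtain rfl : a = 2 := by
      have := h.cover 1 (by simp)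
      grind [h.left_mem, thetaCoeff]
    exact ⟨isValid_two_iff_eq_singleton.1 h, rfl, rfl⟩
  · rintro ⟨rfl, rfl, rfl⟩
    exact ⟨isValid_two_iff_eq_singleton.2 rfl, rfl⟩

lemma setOf_isValid (t : ℕ) :
    {x : Strands | x.IsValid t} = split t ∪ swap '' split t ∪ parallel t := by
  ext ⟨R, a, b⟩
  constructor
  · intro h
    rcases lt_trichotomy a b with hab | hab | hab
    · exact Or.inl (Or.inl ⟨h, hab⟩)
    · exact Or.inr ⟨h, hab⟩
    · exact Or.inl (Or.inr ⟨⟨R, b, a⟩, ⟨isValid_swap.1 h, hab⟩, rfl⟩)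
  · rintro ((h | ⟨y, hy, h⟩) | h)
    · exact h.1
    · rw [← h]; exact isValid_swap.1 hy.1
    · exact h.1

lemma split_succ (ht : 2 ≤ t) : split (t + 1) = split t ∪ closeRight t '' {x | x.IsValid t} := by
  ext ⟨R, a, b⟩
  simp only [split, Set.mem_union, Set.mem_ofPred_eq, Set.mem_image]
  constructor
  · rintro ⟨h, hab⟩
    have hbt : b ≤ t + 1 := h.right_mem.2
    have hat : a ≤ t := by lia
    rcases hbt.lt_or_eq with hb | rfl
    · exact Or.inl ⟨(isValid_succ_iff ht hat (by lia)).1 h, hab⟩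
    · obtain ⟨c, hc, R', rfl, h'⟩ := h.exists_eq_cons ht
      exact Or.inr ⟨⟨R', a, c⟩, (isValid_succ_iff ht hat hc.2).1 h', rfl⟩
  · rintro (⟨h, hab⟩ | ⟨⟨R', a', c⟩, h, hx⟩)
    · exact ⟨(isValid_succ_iff ht h.left_mem.2 h.right_mem.2).2 h, hab⟩
    · obtain ⟨rfl, rfl, rfl⟩ := mk.inj hx
      refine ⟨(isValid_cons_iff h.right_mem).2 ?_, Nat.lt_succ_of_le h.left_mem.2⟩
      exact (isValid_succ_iff ht h.left_mem.2 h.right_mem.2).2 h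

lemma isValid_closeBoth (ht : 2 ≤ t) (h : x.IsValid t) : (closeBoth t x).IsValid (t + 1) :=
  (isValid_cons_iff h.left_mem).2 <| isValid_swap.2 <| (isValid_cons_iff h.right_mem).2 <|
    (isValid_succ_iff ht h.left_mem.2 h.right_mem.2).2 h

lemma IsValid.exists_closeBoth (ht : 2 ≤ t) (h : IsValid (t + 1) ⟨R, t + 1, t + 1⟩) :
    ∃ x ∈ split t ∪ parallel t, closeBoth t x = ⟨R, t + 1, t + 1⟩ := by
  obtain ⟨a, ha, R', rfl, h'⟩ := h.exists_eq_cons ht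
  obtain ⟨b, hb, S, rfl, hS⟩ := (isValid_swap.1 h').exists_eq_cons ht
  rw [isValid_succ_iff ht ha.2 hb.2] at hS
  rcases lt_trichotomy a b with hab | hab | hab
  · exact ⟨⟨S, a, b⟩, Or.inl ⟨hS, hab⟩, rfl⟩
  · exact ⟨⟨S, a, b⟩, Or.inr ⟨hS, hab⟩, rfl⟩
  · refine ⟨⟨S, b, a⟩, Or.inl ⟨isValid_swap.1 hS, hab⟩, ?_⟩
    rw [closeBoth, Multiset.cons_swap]

lemma parallel_succ (ht : 2 ≤ t) :
    parallel (t + 1) = parallel t ∪ closeBoth t '' (split t ∪ parallel t) := by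
  ext ⟨R, a, b⟩
  constructor
  · rintro ⟨h, rfl : a = b⟩
    have hat : a ≤ t + 1 := h.left_mem.2
    rcases hat.lt_or_eq with ha | rfl
    · exact Or.inl ⟨(isValid_succ_iff ht (by lia) (by lia)).1 h, rfl⟩
    · exact Or.inr (h.exists_closeBoth ht)
  · rintro (⟨h, hab⟩ | ⟨x, hx, hxR⟩)
    · exact ⟨(isValid_succ_iff ht h.left_mem.2 h.right_mem.2).2 h, hab⟩
    · rw [← hxR]
      exact ⟨isValid_closeBoth ht (hx.elim And.left And.left), rfl⟩

lemma cons_inj_of_forall_lt {a' : ℕ} {R' : Multiset (ℕ × ℕ)} (hR : ∀ p ∈ R, p.2 < t)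
    (h : (a, t) ::ₘ R = (a', t) ::ₘ R') : a = a' ∧ R = R' := by
  obtain ⟨haa', hRR'⟩ | ⟨-, S, hS, -⟩ := Multiset.cons_eq_cons.1 h
  · exact ⟨congrArg Prod.fst haa', hRR'⟩
  · exact absurd (hR (a', t) (hS ▸ Multiset.mem_cons_self ..)) (lt_irrefl t)

lemma injOn_closeRight (t : ℕ) : Set.InjOn (closeRight t) {x | x.IsValid t} := by
  rintro ⟨R, a, b⟩ hx ⟨R', a', b'⟩ - h
  obtain ⟨hcons, rfl, -⟩ := mk.inj h
  obtain ⟨rfl, rfl⟩ := cons_inj_of_forall_lt (fun p hp => (hx.closed_lt p hp).2.2) hcons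
  rfl

lemma injOn_closeBoth (t : ℕ) : Set.InjOn (closeBoth t) (split t ∪ parallel t) := by
  have valid_and_le {x : Strands} (hx : x ∈ split t ∪ parallel t) :
      (∀ p ∈ x.closed, p.2 < t) ∧ x.left ≤ x.right := by
    rcases hx with hx | hx
    · exact ⟨fun p hp => (hx.1.closed_lt p hp).2.2, hx.2.le⟩
    · exact ⟨fun p hp => (hx.1.closed_lt p hp).2.2, hx.2.le⟩
  rintro ⟨R, a, b⟩ hx ⟨R', a', b'⟩ hy h
  obtain ⟨hR, hab⟩ : (∀ p ∈ R, p.2 < t) ∧ a ≤ b := valid_and_le hx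
  obtain ⟨hR', hab'⟩ : (∀ p ∈ R', p.2 < t) ∧ a' ≤ b' := valid_and_le hy
  have hclosed : (a, t) ::ₘ (b, t) ::ₘ R = (a', t) ::ₘ (b', t) ::ₘ R' := (mk.inj h).1
  obtain ⟨haa', hcons⟩ | ⟨hne, S, hS, hS'⟩ := Multiset.cons_eq_cons.1 hclosed
  · obtain ⟨rfl, rfl⟩ := cons_inj_of_forall_lt hR hcons
    rw [(Prod.mk.inj haa').1]
  · obtain ⟨rfl, -⟩ := cons_inj_of_forall_lt hR hS
    obtain ⟨rfl, -⟩ := cons_inj_of_forall_lt hR' hS'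
    exact absurd (by rw [le_antisymm hab hab']) hne

lemma injective_swap : Function.Injective swap := fun ⟨_, _, _⟩ ⟨_, _, _⟩ h => by
  simp_all [swap]

lemma disjoint_split_parallel (t : ℕ) : Disjoint (split t) (parallel t) :=
  Set.disjoint_left.2 fun _ hx hy => hx.2.ne hy.2

lemma finite_split_and_parallel (ht : 2 ≤ t) : (split t).Finite ∧ (parallel t).Finite := by
  induction t, ht using Nat.le_induction with
  | base => simp [split_two, parallel_two]
  | succ t ht ih =>
    obtain ⟨hsplit, hparallel⟩ := ih
    rw [split_succ ht, parallel_succ ht]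
    have hvalid : {x : Strands | x.IsValid t}.Finite := by
      rw [setOf_isValid]
      exact (hsplit.union (hsplit.image swap)).union hparallel
    exact ⟨hsplit.union (hvalid.image _), hparallel.union ((hsplit.union hparallel).image _)⟩

/-- The number of closed intervals, by which configurations are graded. -/
def numClosed (x : Strands) : ℕ := x.closed.card

lemma genPoly_isValid (ht : 2 ≤ t) :
    genPoly numClosed {x | x.IsValid t} =
      2 * genPoly numClosed (split t) + genPoly numClosed (parallel t) := by
  obtain ⟨hsplit, hparallel⟩ := finite_split_and_parallel ht
  have hswap : genPoly numClosed (swap '' split t) = genPoly numClosed (split t) := by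
    rw [genPoly_image (w := numClosed) (c := 0) injective_swap.injOn fun x _ => rfl, pow_zero,
      one_mul]
  rw [setOf_isValid, genPoly_union _ (hsplit.union (hsplit.image swap)) hparallel,
    genPoly_union _ hsplit (hsplit.image swap), hswap, two_mul]
  · rw [Set.disjoint_left]
    rintro _ hx ⟨y, hy, rfl⟩
    exact lt_asymm hx.2 hy.2
  · rw [Set.disjoint_union_left]
    refine ⟨disjoint_split_parallel t, Set.disjoint_left.2 ?_⟩
    rintro _ ⟨y, hy, rfl⟩ hx
    exact hy.2.ne' hx.2

lemma genPoly_split_succ (ht : 2 ≤ t) :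
    genPoly numClosed (split (t + 1)) =
      (1 + 2 * X) * genPoly numClosed (split t) + X * genPoly numClosed (parallel t) := by
  have hsplit_succ := (finite_split_and_parallel (ht.trans t.le_succ)).1
  rw [split_succ ht, Set.finite_union] at hsplit_succ
  rw [split_succ ht, genPoly_union _ hsplit_succ.1 hsplit_succ.2,
    genPoly_image (w := numClosed) (c := 1) (injOn_closeRight t)
      fun x _ => Multiset.card_cons ..,
    genPoly_isValid ht]
  · ring
  · rw [Set.disjoint_left]
    rintro _ hx ⟨y, -, rfl⟩
    exact (Nat.lt_succ_self t).not_ge hx.1.right_mem.2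

lemma genPoly_closeBoth_image {τ : Type*} {v : τ → ℕ} {f : Strands → τ} (ht : 2 ≤ t)
    (hf : Set.InjOn f (split t ∪ parallel t)) (hv : ∀ x, v (f x) = x.numClosed + 2) :
    genPoly v (f '' (split t ∪ parallel t)) =
      X ^ 2 * (genPoly numClosed (split t) + genPoly numClosed (parallel t)) := by
  obtain ⟨hsplit, hparallel⟩ := finite_split_and_parallel ht
  rw [genPoly_image hf fun x _ => hv x,
    genPoly_union (disjoint_split_parallel t) hsplit hparallel]

lemma genPoly_parallel_succ (ht : 2 ≤ t) :
    genPoly numClosed (parallel (t + 1)) =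
      X ^ 2 * genPoly numClosed (split t) + (1 + X ^ 2) * genPoly numClosed (parallel t) := by
  have hparallel_succ := (finite_split_and_parallel (ht.trans t.le_succ)).2
  rw [parallel_succ ht, Set.finite_union] at hparallel_succ
  rw [parallel_succ ht, genPoly_union _ hparallel_succ.1 hparallel_succ.2,
    genPoly_closeBoth_image ht (injOn_closeBoth t) fun x => by simp [closeBoth, numClosed]]
  · ring
  · rw [Set.disjoint_left]
    rintro _ hx ⟨y, -, rfl⟩
    exact (Nat.lt_succ_self t).not_ge hx.1.right_mem.2

lemma genPoly_split_two : genPoly numClosed (split 2) = 1 := by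
  rw [split_two, genPoly_singleton]; rfl

lemma genPoly_parallel_two : genPoly numClosed (parallel 2) = X := by
  rw [parallel_two, genPoly_singleton, numClosed, Multiset.card_singleton, pow_one]

end Strands

open Strands RootLabel

lemma sum_map_coeff_alpha (R : Multiset (ℕ × ℕ)) (s : ℕ) :
    ((R.map alpha).map (·.coeff s)).sum = coverage R s := by
  induction R using Multiset.induction with
  | empty => rfl
  | cons p R ih =>
    rw [coverage_cons, Multiset.map_cons, Multiset.map_cons, Multiset.sum_cons, ih, add_comm]
    rfl

lemma map_alpha_mem_thetaDecomps_iff {r : ℕ} (hr : 1 ≤ r) {R : Multiset (ℕ × ℕ)} :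
    R.map alpha ∈ thetaDecomps r ↔ Strands.IsValid (r + 1) ⟨R, r + 1, r + 1⟩ := by
  have isValid_iff (p : ℕ × ℕ) :
      (alpha p).IsValid r ↔ 1 ≤ p.1 ∧ p.1 ≤ p.2 ∧ p.2 < r + 1 := by
    simp [RootLabel.IsValid]
  simp only [thetaDecomps, Set.mem_ofPred_eq, Multiset.forall_mem_map_iff, isValid_iff,
    sum_map_coeff_alpha]
  constructor
  · rintro ⟨hclosed, hcover⟩
    refine ⟨hclosed, by simp, by simp, fun s hs => ?_⟩
    rcases hs.2.lt_or_eq with hsr | rfl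
    · have := hcover s ⟨hs.1, by lia⟩
      grind
    · have hR : coverage R (r + 1) = 0 := coverage_eq_zero_iff.2 fun p hp => by grind
      grind [thetaCoeff]
  · rintro ⟨hclosed, -, -, hcover⟩
    refine ⟨hclosed, fun s hs => ?_⟩
    have := hcover s ⟨hs.1, by grind⟩
    grind

lemma beta_cons_map_alpha_mem_thetaDecomps_iff {r : ℕ} {R : Multiset (ℕ × ℕ)} {i j : ℕ} :
    beta (i, j) ::ₘ R.map alpha ∈ thetaDecomps r ↔ ⟨R, i, j⟩ ∈ split r := by
  simp only [thetaDecomps, split, Set.mem_ofPred_eq, Multiset.forall_mem_cons,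
    Multiset.forall_mem_map_iff, Multiset.map_cons, Multiset.sum_cons, sum_map_coeff_alpha]
  simp only [RootLabel.IsValid, RootLabel.coeff]
  constructor
  · rintro ⟨⟨⟨hi, hij, hj⟩, hclosed⟩, hcover⟩
    have hRr : coverage R r = 0 := by
      have := hcover r ⟨by lia, le_rfl⟩
      grind [thetaCoeff]
    rw [coverage_eq_zero_iff] at hRr
    refine ⟨⟨fun p hp => by grind, ⟨hi, by lia⟩, ⟨by lia, hj⟩, fun s hs => ?_⟩, hij⟩
    rw [← hcover s hs]
    ring
  · rintro ⟨⟨hclosed, ⟨hi, -⟩, ⟨-, hj⟩, hcover⟩, hij⟩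
    refine ⟨⟨⟨hi, hij, hj⟩, fun p hp => by grind⟩, fun s hs => ?_⟩
    rw [← hcover s hs]
    ring

lemma exists_eq_map_alpha {M : Multiset RootLabel} (hM : ∀ p, beta p ∉ M) :
    ∃ R : Multiset (ℕ × ℕ), M = R.map alpha := by
  induction M using Multiset.induction with
  | empty => exact ⟨0, rfl⟩
  | cons l M ih =>
    obtain ⟨R, rfl⟩ := ih fun p hp => hM p (Multiset.mem_cons_of_mem hp)
    rcases l with p | p
    · exact ⟨p ::ₘ R, (Multiset.map_cons ..).symm⟩
    · exact absurd (Multiset.mem_cons_self ..) (hM p)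

lemma beta_notMem_of_beta_cons_mem_thetaDecomps {r : ℕ} {M : Multiset RootLabel} {p : ℕ × ℕ}
    (h : beta p ::ₘ M ∈ thetaDecomps r) (q : ℕ × ℕ) : beta q ∉ M := by
  intro hq
  obtain ⟨M, rfl⟩ := Multiset.exists_cons_of_mem hq
  obtain ⟨hvalid, hcover⟩ := h
  simp only [Multiset.forall_mem_cons, RootLabel.IsValid, Multiset.map_cons, Multiset.sum_cons,
    RootLabel.coeff] at hvalid hcover
  have hr := hcover r ⟨by lia, le_rfl⟩
  grind [thetaCoeff]

/-- The decomposition without roots `β[i,j]` obtained by closing both strands at `r`. -/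
def alphaDecomp (r : ℕ) (x : Strands) : Multiset RootLabel := (closeBoth r x).closed.map alpha

/-- The decomposition in which the two strands form a single root `β[i,j]`. -/
def betaDecomp (x : Strands) : Multiset RootLabel :=
  beta (x.left, x.right) ::ₘ x.closed.map alpha

lemma thetaDecomps_eq {r : ℕ} (hr : 2 ≤ r) :
    thetaDecomps r = alphaDecomp r '' (split r ∪ parallel r) ∪ betaDecomp '' split r := by
  ext M
  constructor
  · intro hM
    by_cases hbeta : ∃ p, beta p ∈ M
    · obtain ⟨⟨i, j⟩, hp⟩ := hbeta
      obtain ⟨M, rfl⟩ := Multiset.exists_cons_of_mem hp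
      obtain ⟨R, rfl⟩ := exists_eq_map_alpha (beta_notMem_of_beta_cons_mem_thetaDecomps hM)
      exact Or.inr ⟨⟨R, i, j⟩, beta_cons_map_alpha_mem_thetaDecomps_iff.1 hM, rfl⟩
    · obtain ⟨R, rfl⟩ := exists_eq_map_alpha (not_exists.1 hbeta)
      obtain ⟨x, hx, hxR⟩ :=
        ((map_alpha_mem_thetaDecomps_iff (by lia)).1 hM).exists_closeBoth hr
      exact Or.inl ⟨x, hx, by rw [alphaDecomp, hxR]⟩
  · rintro (⟨x, hx, rfl⟩ | ⟨x, hx, rfl⟩)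
    · exact (map_alpha_mem_thetaDecomps_iff (by lia)).2
        (isValid_closeBoth hr (hx.elim And.left And.left))
    · exact beta_cons_map_alpha_mem_thetaDecomps_iff.2 hx

lemma finite_thetaDecomps {r : ℕ} (hr : 2 ≤ r) : (thetaDecomps r).Finite := by
  obtain ⟨hsplit, hparallel⟩ := finite_split_and_parallel hr
  rw [thetaDecomps_eq hr]
  exact ((hsplit.union hparallel).image _).union (hsplit.image _)

lemma injective_map_alpha : Function.Injective (Multiset.map alpha) :=
  Multiset.map_injective fun _ _ => alpha.inj

lemma injOn_alphaDecomp (r : ℕ) : Set.InjOn (alphaDecomp r) (split r ∪ parallel r) :=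
  fun _ hx _ hy h => injOn_closeBoth r hx hy (Strands.ext (injective_map_alpha h) rfl rfl)

lemma beta_notMem_map_alpha (p : ℕ × ℕ) (R : Multiset (ℕ × ℕ)) : beta p ∉ R.map alpha := by
  simp

lemma injective_betaDecomp : Function.Injective betaDecomp := by
  rintro ⟨R, a, b⟩ ⟨R', a', b'⟩ h
  have hcons : beta (a, b) ::ₘ R.map alpha = beta (a', b') ::ₘ R'.map alpha := h
  obtain ⟨hp, hR⟩ | ⟨-, S, hS, -⟩ := Multiset.cons_eq_cons.1 hcons
  · obtain ⟨rfl, rfl⟩ := Prod.mk.inj (beta.inj hp)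
    rw [injective_map_alpha hR]
  · exact absurd (hS ▸ Multiset.mem_cons_self ..) (beta_notMem_map_alpha (a', b') R)

/-- The generating polynomial `∑ₖ p_{r,k} Xᵏ` of the decompositions of the highest root. -/
noncomputable def thetaPoly (r : ℕ) : ℝ[X] := genPoly Multiset.card (thetaDecomps r)

lemma pB_eq_coeff_thetaPoly {r : ℕ} (hr : 2 ≤ r) (k : ℕ) : pB r k = (thetaPoly r).coeff k := by
  rw [pB, NB_thetaB, thetaPoly, coeff_genPoly (finite_thetaDecomps hr)]

lemma thetaPoly_eq {r : ℕ} (hr : 2 ≤ r) :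
    thetaPoly r = X ^ 2 * (genPoly numClosed (split r) + genPoly numClosed (parallel r)) +
      X * genPoly numClosed (split r) := by
  have hfinite := finite_thetaDecomps hr
  rw [thetaDecomps_eq hr, Set.finite_union] at hfinite
  rw [thetaPoly, thetaDecomps_eq hr, genPoly_union _ hfinite.1 hfinite.2,
    genPoly_closeBoth_image hr (injOn_alphaDecomp r)
      fun x => by simp [alphaDecomp, closeBoth, numClosed],
    genPoly_image (c := 1) (w := numClosed) injective_betaDecomp.injOn
      fun x _ => by simp [betaDecomp, numClosed], pow_one]
  rw [Set.disjoint_left]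
  rintro _ ⟨x, -, rfl⟩ ⟨y, -, h⟩
  have hy : beta (y.left, y.right) ∈ betaDecomp y := Multiset.mem_cons_self ..
  exact beta_notMem_map_alpha _ _ (h ▸ hy)

lemma thetaPoly_two : thetaPoly 2 = X + X ^ 2 + X ^ 3 := by
  rw [thetaPoly_eq le_rfl, genPoly_split_two, genPoly_parallel_two]
  ring

lemma thetaPoly_three : thetaPoly 3 = X + 3 * X ^ 2 + 4 * X ^ 3 + 2 * X ^ 4 + X ^ 5 := by
  rw [thetaPoly_eq (by lia), genPoly_split_succ le_rfl, genPoly_parallel_succ le_rfl,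
    genPoly_split_two, genPoly_parallel_two]
  ring

/- Cayley–Hamilton for the transfer matrix `!![1 + 2X, X; X², 1 + X²]` acting on the pair of
generating polynomials of `split` and `parallel`. -/
lemma thetaPoly_add_two {r : ℕ} (hr : 2 ≤ r) :
    thetaPoly (r + 2) =
      (2 + 2 * X + X ^ 2) * thetaPoly (r + 1) - (1 + 2 * X + X ^ 2 + X ^ 3) * thetaPoly r := by
  simp only [thetaPoly_eq, genPoly_split_succ, genPoly_parallel_succ, hr,
    hr.trans (Nat.le_add_right r _)]
  ring

section ThetaMoments

variable {r : ℕ}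

lemma eval_thetaPoly_add_two (hr : 2 ≤ r) :
    (thetaPoly (r + 2)).eval 1 = 5 * (thetaPoly (r + 1)).eval 1 - 5 * (thetaPoly r).eval 1 := by
  simp only [thetaPoly_add_two hr, eval_sub, eval_mul, eval_add, eval_pow, eval_X, eval_one,
    eval_ofNat]
  ring

lemma eval_derivative_thetaPoly_add_two (hr : 2 ≤ r) :
    (derivative (thetaPoly (r + 2))).eval 1 =
      5 * (derivative (thetaPoly (r + 1))).eval 1 + 4 * (thetaPoly (r + 1)).eval 1 -
        5 * (derivative (thetaPoly r)).eval 1 - 7 * (thetaPoly r).eval 1 := by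
  simp only [thetaPoly_add_two hr, derivative_sub, derivative_mul, derivative_add, derivative_pow,
    derivative_X, derivative_ofNat, derivative_one, eval_sub, eval_mul, eval_add, eval_pow, eval_X,
    eval_one, eval_zero, eval_ofNat, eval_C]
  ring

lemma eval_derivative_X_mul_derivative_thetaPoly_add_two (hr : 2 ≤ r) :
    (derivative (X * derivative (thetaPoly (r + 2)))).eval 1 =
      5 * (derivative (X * derivative (thetaPoly (r + 1)))).eval 1 +
        8 * (derivative (thetaPoly (r + 1))).eval 1 + 6 * (thetaPoly (r + 1)).eval 1 -
        5 * (derivative (X * derivative (thetaPoly r))).eval 1 -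
        14 * (derivative (thetaPoly r)).eval 1 - 15 * (thetaPoly r).eval 1 := by
  simp only [thetaPoly_add_two hr, derivative_sub, derivative_mul, derivative_add, derivative_pow,
    derivative_X, derivative_ofNat, derivative_one, derivative_zero, derivative_C, eval_sub,
    eval_mul, eval_add, eval_pow, eval_X, eval_one, eval_zero, eval_ofNat, eval_C]
  ring

/-- For `s = ±√5`, the contribution of the characteristic root `(5 + s) / 2` to the number of
decompositions, multiplied by `50 * 2 ^ r`. -/
def totalTerm (s : ℝ) (r : ℕ) : ℝ := (5 + 3 * s) * (5 + s) ^ r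

/-- For `s = ±√5`, the contribution of the characteristic root `(5 + s) / 2` to the first moment,
multiplied by `250 * 2 ^ r`. -/
def firstTerm (s : ℝ) (r : ℕ) : ℝ := (5 + s + (25 + 13 * s) * r) * (5 + s) ^ r

/-- For `s = ±√5`, the contribution of the characteristic root `(5 + s) / 2` to the second moment,
multiplied by `1250 * 2 ^ r`. -/
def secondTerm (s : ℝ) (r : ℕ) : ℝ :=
  ((120 + 58 * s) * r ^ 2 + (105 + 51 * s) * r - (5 + 45 * s)) * (5 + s) ^ r

variable {s : ℝ}

lemma totalTerm_add_two (hs : s ^ 2 = 5) (r : ℕ) :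
    totalTerm s (r + 2) = 10 * totalTerm s (r + 1) - 20 * totalTerm s r := by
  simp only [totalTerm]
  linear_combination (5 + 3 * s) * (5 + s) ^ r * hs

lemma firstTerm_add_two (hs : s ^ 2 = 5) (r : ℕ) :
    firstTerm s (r + 2) = 10 * firstTerm s (r + 1) + 40 * totalTerm s (r + 1) -
      20 * firstTerm s r - 140 * totalTerm s r := by
  simp only [totalTerm, firstTerm, Nat.cast_add, Nat.cast_ofNat, Nat.cast_one]
  grind

lemma secondTerm_add_two (hs : s ^ 2 = 5) (r : ℕ) :
    secondTerm s (r + 2) = 10 * secondTerm s (r + 1) + 80 * firstTerm s (r + 1) +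
      300 * totalTerm s (r + 1) - 20 * secondTerm s r - 280 * firstTerm s r -
      1500 * totalTerm s r := by
  simp only [totalTerm, firstTerm, secondTerm, Nat.cast_add, Nat.cast_ofNat, Nat.cast_one]
  grind

lemma sq_firstTerm_sub_totalTerm_mul_secondTerm (hs : s ^ 2 = 5) (r : ℕ) :
    (firstTerm (-s) r + firstTerm s r) ^ 2 -
        (totalTerm (-s) r + totalTerm s r) * (secondTerm (-s) r + secondTerm s r) =
      5 * (20 ^ (r + 1) * (r : ℝ) ^ 2 +
        (26 * (3 * s - 7) * (5 - s) ^ (2 * r) - 26 * (3 * s + 7) * (5 + s) ^ (2 * r) +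
          (36 / 5) * 20 ^ (r + 1)) * r +
        2 * (73 - 25 * s) * (5 - s) ^ (2 * r) + 2 * (73 + 25 * s) * (5 + s) ^ (2 * r) -
        (63 / 5) * 20 ^ (r + 1)) := by
  have hpow : (20 : ℝ) ^ (r + 1) = 20 * ((5 - s) ^ r * (5 + s) ^ r) := by
    rw [← mul_pow, pow_succ', show (5 - s) * (5 + s) = 20 by linear_combination -hs]
  simp only [totalTerm, firstTerm, secondTerm, hpow, ← sub_eq_add_neg, mul_comm 2 r, pow_mul]
  generalize (5 - s) ^ r = x, (5 + s) ^ r = y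
  grind

lemma sq_sqrt_five : √(5 : ℝ) ^ 2 = 5 := Real.sq_sqrt (by norm_num)

lemma neg_sqrt_five_sq : (-√(5 : ℝ)) ^ 2 = 5 := by rw [neg_sq, sq_sqrt_five]

lemma mul_eval_thetaPoly (hr : 2 ≤ r) :
    50 * 2 ^ r * (thetaPoly r).eval 1 = totalTerm (-√5) r + totalTerm √5 r := by
  obtain ⟨n, rfl⟩ := Nat.exists_eq_add_of_le' hr
  induction n using Nat.twoStepInduction with
  | zero =>
    have hvalue : (thetaPoly 2).eval 1 = 3 := by norm_num [thetaPoly_two]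
    simp only [zero_add, hvalue, totalTerm]
    grind [sq_sqrt_five]
  | one =>
    have hvalue : (thetaPoly 3).eval 1 = 11 := by norm_num [thetaPoly_three]
    simp only [Nat.reduceAdd, hvalue, totalTerm]
    grind [sq_sqrt_five]
  | more n ih ih' =>
    rw [add_right_comm n 2 2, totalTerm_add_two sq_sqrt_five, totalTerm_add_two neg_sqrt_five_sq,
      eval_thetaPoly_add_two (by lia)]
    linear_combination 10 * ih' (by lia) - 20 * ih (by lia)

lemma mul_eval_derivative_thetaPoly (hr : 2 ≤ r) :
    250 * 2 ^ r * (derivative (thetaPoly r)).eval 1 = firstTerm (-√5) r + firstTerm √5 r := by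
  obtain ⟨n, rfl⟩ := Nat.exists_eq_add_of_le' hr
  induction n using Nat.twoStepInduction with
  | zero =>
    have hvalue : (derivative (thetaPoly 2)).eval 1 = 6 := by
      norm_num [thetaPoly_two, derivative_pow]
    simp only [zero_add, hvalue, firstTerm]
    grind [sq_sqrt_five]
  | one =>
    have hvalue : (derivative (thetaPoly 3)).eval 1 = 32 := by
      norm_num [thetaPoly_three, derivative_pow]
    simp only [Nat.reduceAdd, hvalue, firstTerm]
    grind [sq_sqrt_five]
  | more n ih ih' =>
    rw [add_right_comm n 2 2, firstTerm_add_two sq_sqrt_five, firstTerm_add_two neg_sqrt_five_sq,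
      eval_derivative_thetaPoly_add_two (by lia)]
    linear_combination 10 * ih' (by lia) - 20 * ih (by lia) +
      40 * mul_eval_thetaPoly (r := n + 2 + 1) (by lia) -
      140 * mul_eval_thetaPoly (r := n + 2) (by lia)

lemma mul_eval_derivative_X_mul_derivative_thetaPoly (hr : 2 ≤ r) :
    1250 * 2 ^ r * (derivative (X * derivative (thetaPoly r))).eval 1 =
      secondTerm (-√5) r + secondTerm √5 r := by
  obtain ⟨n, rfl⟩ := Nat.exists_eq_add_of_le' hr
  induction n using Nat.twoStepInduction with
  | zero =>
    have hvalue : (derivative (X * derivative (thetaPoly 2))).eval 1 = 14 := by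
      norm_num [thetaPoly_two, derivative_pow]
    simp only [zero_add, hvalue, secondTerm]
    grind [sq_sqrt_five]
  | one =>
    have hvalue : (derivative (X * derivative (thetaPoly 3))).eval 1 = 106 := by
      norm_num [thetaPoly_three, derivative_pow]
    simp only [Nat.reduceAdd, hvalue, secondTerm]
    grind [sq_sqrt_five]
  | more n ih ih' =>
    rw [add_right_comm n 2 2, secondTerm_add_two sq_sqrt_five,
      secondTerm_add_two neg_sqrt_five_sq,
      eval_derivative_X_mul_derivative_thetaPoly_add_two (by lia)]
    linear_combination 10 * ih' (by lia) - 20 * ih (by lia) +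
      80 * mul_eval_derivative_thetaPoly (r := n + 2 + 1) (by lia) +
      300 * mul_eval_thetaPoly (r := n + 2 + 1) (by lia) -
      280 * mul_eval_derivative_thetaPoly (r := n + 2) (by lia) -
      1500 * mul_eval_thetaPoly (r := n + 2) (by lia)

lemma totalTerm_add_pos (r : ℕ) : 0 < totalTerm (-√5) r + totalTerm √5 r := by
  have hlt : √(5 : ℝ) < 5 := by
    rw [Real.sqrt_lt' (by norm_num)]
    norm_num
  have hx : 0 < (5 - √5) ^ r := pow_pos (sub_pos.2 hlt) r
  have hxy : (5 - √5) ^ r ≤ (5 + √5) ^ r :=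
    pow_le_pow_left₀ (sub_pos.2 hlt).le (by linarith [Real.sqrt_nonneg 5]) r
  have hsplit : totalTerm (-√5) r + totalTerm √5 r =
      5 * ((5 - √5) ^ r + (5 + √5) ^ r) + 3 * √5 * ((5 + √5) ^ r - (5 - √5) ^ r) := by
    simp only [totalTerm, ← sub_eq_add_neg]
    ring
  rw [hsplit]
  exact add_pos_of_pos_of_nonneg (mul_pos (by norm_num) (add_pos hx (by positivity)))
    (mul_nonneg (by positivity) (sub_nonneg.2 hxy))

lemma muB_eq (hr : 2 ≤ r) :
    muB r = (firstTerm (-√5) r + firstTerm √5 r) /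
      (5 * (totalTerm (-√5) r + totalTerm √5 r)) := by
  simp only [muB, pB_eq_coeff_thetaPoly hr, tsum_coeff, tsum_mul_coeff]
  rw [← mul_eval_thetaPoly hr, ← mul_eval_derivative_thetaPoly hr]
  field_simp
  ring

lemma varB_eq (hr : 2 ≤ r) :
    varB r =
      ((firstTerm (-√5) r + firstTerm √5 r) ^ 2 -
        (totalTerm (-√5) r + totalTerm √5 r) * (secondTerm (-√5) r + secondTerm √5 r)) /
      (5 * (-5 * (totalTerm (-√5) r + totalTerm √5 r) ^ 2)) := by
  have hpos := totalTerm_add_pos r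
  have hsecond : (∑' k : ℕ, (k : ℝ) ^ 2 * pB r k) / (∑' k : ℕ, pB r k) =
      (secondTerm (-√5) r + secondTerm √5 r) /
        (25 * (totalTerm (-√5) r + totalTerm √5 r)) := by
    simp only [pB_eq_coeff_thetaPoly hr, tsum_coeff, tsum_sq_mul_coeff]
    rw [← mul_eval_thetaPoly hr, ← mul_eval_derivative_X_mul_derivative_thetaPoly hr]
    field_simp
    ring
  rw [varB, hsecond, muB_eq hr]
  field_simp
  ring

end ThetaMoments

/-- Theorem 1.2, type `B_r`: closed formulas for the mean and variance of the number of
positive roots used in the decompositions of the highest root of `B_r`. -/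
theorem mean_variance_highestRoot_typeB (r : ℕ) (hr : 2 ≤ r) :
    muB r =
      ((5 - Real.sqrt 5 + (25 - 13 * Real.sqrt 5) * r) * (5 - Real.sqrt 5) ^ r +
        (5 + Real.sqrt 5 + (25 + 13 * Real.sqrt 5) * r) * (5 + Real.sqrt 5) ^ r) /
      (5 * ((5 - 3 * Real.sqrt 5) * (5 - Real.sqrt 5) ^ r +
        (5 + 3 * Real.sqrt 5) * (5 + Real.sqrt 5) ^ r)) ∧
    varB r =
      (20 ^ (r + 1) * (r : ℝ) ^ 2 +
        (26 * (3 * Real.sqrt 5 - 7) * (5 - Real.sqrt 5) ^ (2 * r) -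
          26 * (3 * Real.sqrt 5 + 7) * (5 + Real.sqrt 5) ^ (2 * r) +
          (36 / 5) * 20 ^ (r + 1)) * r +
        2 * (73 - 25 * Real.sqrt 5) * (5 - Real.sqrt 5) ^ (2 * r) +
        2 * (73 + 25 * Real.sqrt 5) * (5 + Real.sqrt 5) ^ (2 * r) -
        (63 / 5) * 20 ^ (r + 1)) /
      (-5 * ((5 - 3 * Real.sqrt 5) * (5 - Real.sqrt 5) ^ r +
        (5 + 3 * Real.sqrt 5) * (5 + Real.sqrt 5) ^ r) ^ 2) := by
  have htotal : totalTerm (-√5) r + totalTerm √5 r =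
      (5 - 3 * √5) * (5 - √5) ^ r + (5 + 3 * √5) * (5 + √5) ^ r := by
    simp only [totalTerm, mul_neg, ← sub_eq_add_neg]
  have hfirst : firstTerm (-√5) r + firstTerm √5 r =
      (5 - √5 + (25 - 13 * √5) * r) * (5 - √5) ^ r +
        (5 + √5 + (25 + 13 * √5) * r) * (5 + √5) ^ r := by
    simp only [firstTerm, mul_neg, ← sub_eq_add_neg]
  refine ⟨by rw [muB_eq hr, hfirst, htotal], ?_⟩
  rw [varB_eq hr, sq_firstTerm_sub_totalTerm_mul_secondTerm sq_sqrt_five, htotal,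
    mul_div_mul_left _ _ (by norm_num)]
end

section
/- For r ≥ 1 let p_{r,k} = N_k(𝟙) be the number of decompositions of the highest root 𝟙 = (1,…,1) ∈ ℕ^r of A_r as a sum of exactly k positive roots, and set μ_r = (r+1)/2 and σ_r = √((r−1)/4). Then for every x ∈ ℝ: lim_{r→∞} (Σ_{k ∈ ℕ, k ≤ μ_r + x·σ_r} p_{r,k}) / (Σ_{k≥0} p_{r,k}) = (1/√(2π))·∫_{−∞}^x e^{−u²/2} du. That is, the normalized number of positive roots used in the decompositions of the highest root of A_r converges in distribution to the standard normal as r → ∞. -/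
open Polynomial

/-- The positive roots of the Lie algebra of type `A_r` in simple-root coordinates:
the indicator vectors `α[i,j]` of the intervals `[i,j]` for `1 ≤ i ≤ j ≤ r`
(positions are `1`-based, so position `i` corresponds to `t : Fin r` with `t.val + 1 = i`). -/
def isPosRootA (r : ℕ) (v : Fin r → ℕ) : Prop :=
  ∃ i j : ℕ, 1 ≤ i ∧ i ≤ j ∧ j ≤ r ∧
    v = fun t => if i ≤ t.val + 1 ∧ t.val + 1 ≤ j then 1 else 0

/-- `NA r k ξ` is the number of decompositions of the weight `ξ` as a sum of exactly `k`
positive roots of `A_r`, i.e. the number of `ℕ`-valued functions (with finite support)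
on the set of positive roots whose values sum to `k` and whose weighted vector sum is `ξ`. -/
noncomputable def NA (r k : ℕ) (ξ : Fin r → ℕ) : ℕ :=
  Set.ncard {m : (Fin r → ℕ) →₀ ℕ |
    (∀ v ∈ m.support, isPosRootA r v) ∧
    (m.sum fun _ n => n) = k ∧
    (m.sum fun v n => n • v) = ξ}

/-!
Positive roots of `A_r` are the indicators of nonempty intervals, so a decomposition of the highest
root is a partition of `{1, …, r}` into intervals. Such a partition is determined by the set of left
ends of its intervals, which can be any set containing `1`. Hence the number of decompositions into
`k ≥ 1` roots is `(r - 1).choose (k - 1)`, and the number of roots used is distributed as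
`1 + Bin(r - 1, 1/2)`. The de Moivre–Laplace theorem concludes: the characteristic function of the
affinely rescaled binomial law is the `n`-th power of that of a centered two-point law of variance
`1`, which tends to `exp (-t ^ 2 / 2)` when the argument is divided by `√n`.
-/

lemma NA_eq_ncard_multiset (r k : ℕ) (ξ : Fin r → ℕ) :
    NA r k ξ = {M : Multiset (Fin r → ℕ) |
      (∀ v ∈ M, isPosRootA r v) ∧ M.card = k ∧ M.sum = ξ}.ncard := by
  refine Set.ncard_congr (fun m _ => m.toMultiset) ?_
    (fun _ _ _ _ h => Multiset.toFinsupp.symm.injective h)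
    (fun M hM => ⟨M.toFinsupp, ?_, M.toFinsupp_toMultiset⟩)
  · rintro m ⟨h_root, h_card, h_sum⟩
    exact ⟨by simpa using h_root, by rw [Finsupp.card_toMultiset]; exact h_card,
      by rw [Finsupp.sum_toMultiset]; exact h_sum⟩
  · obtain ⟨h_root, h_card, h_sum⟩ := hM
    refine ⟨by simpa using h_root, by rw [← h_card, ← Multiset.toFinsupp_sum_eq]; rfl, ?_⟩
    rw [← h_sum, ← Finsupp.sum_toMultiset, Multiset.toFinsupp_toMultiset]

lemma nonempty_and_ordConnected_iff_exists_Icc {α : Type*} [LinearOrder α] [Finite α] {s : Set α} :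
    (s.Nonempty ∧ s.OrdConnected) ↔ ∃ a b, a ≤ b ∧ s = Set.Icc a b := by
  constructor
  · rintro ⟨h_nonempty, h_conn⟩
    obtain ⟨a, ha⟩ := s.toFinite.exists_minimal h_nonempty
    obtain ⟨b, hb⟩ := s.toFinite.exists_maximal h_nonempty
    rw [minimal_iff_isLeast] at ha
    rw [maximal_iff_isGreatest] at hb
    exact ⟨a, b, ha.2 hb.1,
      Set.Subset.antisymm (fun _ ht => ⟨ha.2 ht, hb.2 ht⟩) (h_conn.out ha.1 hb.1)⟩
  · rintro ⟨a, b, hab, rfl⟩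
    exact ⟨Set.nonempty_Icc.2 hab, Set.ordConnected_Icc⟩

lemma isPosRootA_iff_exists_indicator_Icc {r : ℕ} {v : Fin r → ℕ} :
    isPosRootA r v ↔ ∃ a b : Fin r, a ≤ b ∧ v = (Set.Icc a b).indicator 1 := by
  constructor
  · rintro ⟨i, j, hi, hij, hj, rfl⟩
    refine ⟨⟨i - 1, by omega⟩, ⟨j - 1, by omega⟩, Fin.mk_le_mk.2 (by omega), ?_⟩
    funext t
    have h_iff : (i ≤ t.val + 1 ∧ t.val + 1 ≤ j) ↔ (i - 1 ≤ t.val ∧ t.val ≤ j - 1) := by omega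
    simp only [Set.indicator_apply, Set.mem_Icc, Fin.le_def, h_iff, Pi.one_apply]
  · rintro ⟨a, b, hab, rfl⟩
    refine ⟨a + 1, b + 1, by omega, by simpa using hab, b.isLt, ?_⟩
    funext t
    simp only [Set.indicator_apply, Set.mem_Icc, Fin.le_def, Nat.add_le_add_iff_right, Pi.one_apply]

lemma nodup_of_sum_eq_one {ι : Type*} {M : Multiset (ι → ℕ)} (h_zero : 0 ∉ M) (h_sum : M.sum = 1) :
    M.Nodup := by
  rw [Multiset.nodup_iff_le]
  intro v h_le
  obtain ⟨t, ht⟩ : ∃ t, v t ≠ 0 := by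
    rw [← Function.ne_iff]
    rintro rfl
    exact h_zero (Multiset.mem_of_le h_le (Multiset.mem_cons_self _ _))
  have h_two : v t + v t ≤ 1 := by
    obtain ⟨N, rfl⟩ := Multiset.le_iff_exists_add.1 h_le
    rw [← Pi.one_apply (M := fun _ => ℕ) t, ← h_sum]
    simp
  omega

section IntervalPartition

variable {ι : Type*} [LinearOrder ι]

/-- The interval with left end `a` in the partition of `ι` whose intervals have the elements of `L`
as left ends; it is empty unless `a ∈ L`. -/
def block (L : Finset ι) (a : ι) : Set ι :=
  {t | IsGreatest {b | b ∈ L ∧ b ≤ t} a}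

lemma isLeast_block {L : Finset ι} {a : ι} (ha : a ∈ L) : IsLeast (block L a) a :=
  ⟨⟨⟨ha, le_rfl⟩, fun _ hb => hb.2⟩, fun _ ht => ht.1.2⟩

lemma ordConnected_block (L : Finset ι) (a : ι) : (block L a).OrdConnected :=
  ⟨fun _ hs _ hu _ ht =>
    ⟨⟨hs.1.1, hs.1.2.trans ht.1⟩, fun _ hb => hu.2 ⟨hb.1, hb.2.trans ht.2⟩⟩⟩

lemma injOn_block (L : Finset ι) : Set.InjOn (block L) L :=
  fun _ ha _ hb h => (isLeast_block ha).unique (h ▸ isLeast_block hb)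

lemma sum_indicator_block [OrderBot ι] {L : Finset ι} (hL : ⊥ ∈ L) :
    ∑ a ∈ L, (block L a).indicator (1 : ι → ℕ) = 1 := by
  funext t
  obtain ⟨a, ha⟩ : ∃ a, t ∈ block L a := by
    have h_max := (L.filter (· ≤ t)).isGreatest_max' ⟨⊥, by simp [hL]⟩
    rw [Finset.coe_filter] at h_max
    exact ⟨_, h_max⟩
  rw [Finset.sum_apply, Finset.sum_eq_single_of_mem a ha.1.1]
  · exact Set.indicator_of_mem ha _
  · exact fun b _ hba => Set.indicator_of_notMem (fun hb : t ∈ block L b => hba (hb.unique ha)) _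

/-- A partition of `ι` into finitely many nonempty intervals (order-connected sets), each
represented by its `ℕ`-valued indicator function. -/
structure IsIntervalPartition (S : Finset (ι → ℕ)) : Prop where
  isInterval : ∀ v ∈ S, ∃ s : Set ι, (s.Nonempty ∧ s.OrdConnected) ∧ v = s.indicator 1
  sum_eq_one : ∑ v ∈ S, v = 1

namespace IsIntervalPartition

variable {S : Finset (ι → ℕ)}

lemma exists_apply_ne_zero (hS : IsIntervalPartition S) (t : ι) : ∃ v ∈ S, v t ≠ 0 := by
  apply Finset.exists_ne_zero_of_sum_ne_zero
  rw [← Finset.sum_apply, hS.sum_eq_one]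
  exact one_ne_zero

lemma eq_of_apply_ne_zero (hS : IsIntervalPartition S) {v w : ι → ℕ} (hv : v ∈ S) (hw : w ∈ S)
    {t : ι} (hvt : v t ≠ 0) (hwt : w t ≠ 0) : v = w := by
  classical
  by_contra h_ne
  have h_le : v t + w t ≤ 1 := calc
    v t + w t = ∑ u ∈ {v, w}, u t := (Finset.sum_pair (f := fun u : ι → ℕ => u t) h_ne).symm
    _ ≤ ∑ u ∈ S, u t := Finset.sum_le_sum_of_subset (by grind)
    _ = 1 := by rw [← Finset.sum_apply, hS.sum_eq_one, Pi.one_apply]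
  omega

lemma ordConnected_support (hS : IsIntervalPartition S) {v : ι → ℕ} (hv : v ∈ S) :
    v.support.OrdConnected := by
  obtain ⟨s, ⟨-, h_conn⟩, rfl⟩ := hS.isInterval v hv
  simpa using h_conn

lemma exists_isLeast_support [WellFoundedLT ι] (hS : IsIntervalPartition S) {v : ι → ℕ}
    (hv : v ∈ S) : ∃ a, IsLeast v.support a := by
  obtain ⟨s, ⟨h_nonempty, -⟩, rfl⟩ := hS.isInterval v hv
  simpa [minimal_iff_isLeast] using exists_minimal_of_wellFoundedLT (· ∈ s) h_nonempty

lemma eq_indicator_support (hS : IsIntervalPartition S) {v : ι → ℕ} (hv : v ∈ S) :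
    v = v.support.indicator 1 := by
  obtain ⟨s, -, rfl⟩ := hS.isInterval v hv
  simp

lemma support_eq_block (hS : IsIntervalPartition S) {left : (ι → ℕ) → ι}
    (h_left : ∀ v ∈ S, IsLeast v.support (left v)) {v : ι → ℕ} (hv : v ∈ S) :
    v.support = block (S.image left) (left v) := by
  ext t
  constructor
  · refine fun ht => ⟨⟨Finset.mem_image_of_mem _ hv, (h_left v hv).2 ht⟩, ?_⟩
    rintro _ ⟨hb, hbt⟩
    obtain ⟨w, hw, rfl⟩ := Finset.mem_image.1 hb
    by_contra! h_lt
    have hvw : left w ∈ v.support :=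
      (hS.ordConnected_support hv).out (h_left v hv).1 ht ⟨h_lt.le, hbt⟩
    exact h_lt.ne (congrArg left (hS.eq_of_apply_ne_zero hv hw hvw (h_left w hw).1))
  · rintro ⟨⟨-, h_le⟩, h_max⟩
    obtain ⟨w, hw, hwt⟩ := hS.exists_apply_ne_zero t
    have hwv : left w ≤ left v := h_max ⟨Finset.mem_image_of_mem _ hw, (h_left w hw).2 hwt⟩
    have hvw : left v ∈ w.support :=
      (hS.ordConnected_support hw).out (h_left w hw).1 hwt ⟨hwv, h_le⟩
    rwa [hS.eq_of_apply_ne_zero hv hw (h_left v hv).1 hvw]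

end IsIntervalPartition

open scoped Classical in
/-- The interval partition of `ι` whose intervals have the elements of `L` as left ends,
provided `L` contains the least element of `ι`. -/
noncomputable def blocks (L : Finset ι) : Finset (ι → ℕ) :=
  L.image fun a => (block L a).indicator 1

lemma mem_blocks {L : Finset ι} {v : ι → ℕ} :
    v ∈ blocks L ↔ ∃ a ∈ L, (block L a).indicator 1 = v := by
  simp only [blocks, Finset.mem_image]

lemma injOn_indicator_block (L : Finset ι) :
    Set.InjOn (fun a => (block L a).indicator (1 : ι → ℕ)) L :=
  fun _ ha _ hb h => injOn_block L ha hb (Set.indicator_one_inj ℕ h)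

lemma card_blocks (L : Finset ι) : (blocks L).card = L.card := by
  classical exact Finset.card_image_of_injOn (injOn_indicator_block L)

lemma isIntervalPartition_blocks [OrderBot ι] {L : Finset ι} (hL : ⊥ ∈ L) :
    IsIntervalPartition (blocks L) where
  isInterval v hv := by
    obtain ⟨a, ha, rfl⟩ := mem_blocks.1 hv
    exact ⟨block L a, ⟨⟨a, (isLeast_block ha).1⟩, ordConnected_block L a⟩, rfl⟩
  sum_eq_one := by
    classical
    rw [blocks, Finset.sum_image (injOn_indicator_block L), sum_indicator_block hL]

lemma mem_iff_exists_mem_blocks {L : Finset ι} {a : ι} :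
    a ∈ L ↔ ∃ v ∈ blocks L, IsLeast v.support a := by
  constructor
  · exact fun ha => ⟨_, mem_blocks.2 ⟨a, ha, rfl⟩, by simpa using isLeast_block ha⟩
  · rintro ⟨v, hv, ha⟩
    obtain ⟨b, hb, rfl⟩ := mem_blocks.1 hv
    have hb_least : IsLeast (Function.support ((block L b).indicator (1 : ι → ℕ))) b := by
      simpa using isLeast_block hb
    rwa [ha.unique hb_least]

lemma blocks_injective : Function.Injective (blocks : Finset ι → Finset (ι → ℕ)) :=
  fun _ _ h => Finset.ext fun _ => by
    rw [mem_iff_exists_mem_blocks, h, ← mem_iff_exists_mem_blocks]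

lemma IsIntervalPartition.exists_blocks_eq [OrderBot ι] [WellFoundedLT ι] {S : Finset (ι → ℕ)}
    (hS : IsIntervalPartition S) : ∃ L, ⊥ ∈ L ∧ blocks L = S := by
  classical
  choose! left h_left using fun v hv => hS.exists_isLeast_support (v := v) hv
  refine ⟨S.image left, ?_, ?_⟩
  · obtain ⟨v, hv, hv_bot⟩ := hS.exists_apply_ne_zero ⊥
    exact Finset.mem_image.2 ⟨v, hv, le_bot_iff.1 ((h_left v hv).2 hv_bot)⟩
  · have h_block : ∀ v ∈ S, (block (S.image left) (left v)).indicator 1 = v := fun v hv => by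
      rw [← hS.support_eq_block h_left hv, ← hS.eq_indicator_support hv]
    ext v
    rw [mem_blocks, Finset.exists_mem_image]
    exact ⟨fun ⟨w, hw, hwv⟩ => hwv ▸ (h_block w hw).symm ▸ hw, fun hv => ⟨v, hv, h_block v hv⟩⟩

lemma ncard_isIntervalPartition [OrderBot ι] [Fintype ι] (k : ℕ) :
    {S : Finset (ι → ℕ) | IsIntervalPartition S ∧ S.card = k + 1}.ncard =
      (Fintype.card ι - 1).choose k := by
  have h_image : {S : Finset (ι → ℕ) | IsIntervalPartition S ∧ S.card = k + 1} =
      blocks '' ((Finset.univ.powersetCard (k + 1)).filter ({⊥} ⊆ ·) : Finset (Finset ι)) := by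
    ext S
    simp only [Finset.coe_filter, Finset.mem_powersetCard_univ, Finset.singleton_subset_iff,
      Set.mem_image, Set.mem_ofPred_eq]
    constructor
    · rintro ⟨hS, h_card⟩
      obtain ⟨L, hL, rfl⟩ := hS.exists_blocks_eq
      exact ⟨L, ⟨(card_blocks L).symm.trans h_card, hL⟩, rfl⟩
    · rintro ⟨L, ⟨h_card, hL⟩, rfl⟩
      exact ⟨isIntervalPartition_blocks hL, (card_blocks L).trans h_card⟩
  rw [h_image, Set.ncard_image_of_injective _ blocks_injective, Set.ncard_coe_finset,
    Finset.card_filter_powersetCard_subset _ _ _ (Finset.subset_univ _) (by simp)]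
  simp

end IntervalPartition

lemma isPosRootA_iff_exists_ordConnected {r : ℕ} {v : Fin r → ℕ} :
    isPosRootA r v ↔
      ∃ s : Set (Fin r), (s.Nonempty ∧ s.OrdConnected) ∧ v = s.indicator 1 := by
  simp only [isPosRootA_iff_exists_indicator_Icc, nonempty_and_ordConnected_iff_exists_Icc]
  grind

lemma not_isPosRootA_zero (r : ℕ) : ¬ isPosRootA r 0 := by
  rw [isPosRootA_iff_exists_indicator_Icc]
  rintro ⟨a, b, hab, h⟩
  simpa [hab] using congrFun h a

lemma NA_one_eq_ncard_isIntervalPartition (r k : ℕ) :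
    NA r k (fun _ => 1) = {S | IsIntervalPartition (ι := Fin r) S ∧ S.card = k}.ncard := by
  rw [NA_eq_ncard_multiset, ← Set.ncard_image_of_injective _ Finset.val_injective]
  congr 1
  ext M
  constructor
  · rintro ⟨h_root, h_card, h_sum⟩
    have h_nodup : M.Nodup :=
      nodup_of_sum_eq_one (fun h_zero => not_isPosRootA_zero r (h_root 0 h_zero)) h_sum
    refine ⟨⟨M, h_nodup⟩, ⟨⟨fun v hv => ?_, ?_⟩, h_card⟩, rfl⟩
    · exact isPosRootA_iff_exists_ordConnected.1 (h_root v hv)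
    · rw [Finset.sum_eq_multiset_sum, Multiset.map_id']
      exact h_sum
  · rintro ⟨S, ⟨hS, h_card⟩, rfl⟩
    exact ⟨fun v hv => isPosRootA_iff_exists_ordConnected.2 (hS.isInterval v hv), h_card,
      (Finset.sum_val S).trans hS.sum_eq_one⟩

lemma NA_succ_succ_one (n k : ℕ) : NA (n + 1) (k + 1) (fun _ => 1) = n.choose k := by
  rw [NA_one_eq_ncard_isIntervalPartition, ncard_isIntervalPartition, Fintype.card_fin,
    Nat.add_sub_cancel]

lemma NA_succ_zero_one (n : ℕ) : NA (n + 1) 0 (fun _ => 1) = 0 := by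
  suffices h_empty : {S | IsIntervalPartition (ι := Fin (n + 1)) S ∧ S.card = 0} = ∅ by
    rw [NA_one_eq_ncard_isIntervalPartition, h_empty, Set.ncard_empty]
  refine Set.eq_empty_of_forall_notMem ?_
  rintro S ⟨hS, h_card⟩
  obtain ⟨v, hv, -⟩ := hS.exists_apply_ne_zero 0
  exact Finset.card_ne_zero_of_mem hv h_card

section DeMoivreLaplace

open Filter MeasureTheory ProbabilityTheory unitInterval
open scoped Topology

lemma tendsto_measureReal_le_of_tendstoInDistribution {ι E Ω' : Type*} {Ω : ι → Type*}
    [TopologicalSpace E] [LinearOrder E] [OrderClosedTopology E] [HasOuterApproxClosed E]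
    [MeasurableSpace E] [OpensMeasurableSpace E] [∀ i, MeasurableSpace (Ω i)] [MeasurableSpace Ω']
    {μ : ∀ i, Measure (Ω i)} {μ' : Measure Ω'} [∀ i, IsProbabilityMeasure (μ i)]
    [IsProbabilityMeasure μ'] {X : ∀ i, Ω i → E} {Z : Ω' → E} {l : Filter ι} {x : E}
    (h : TendstoInDistribution X l Z μ μ') (hx : μ' {ω | Z ω = x} = 0) :
    Tendsto (fun i => (μ i).real {ω | X i ω ≤ x}) l (𝓝 (μ'.real {ω | Z ω ≤ x})) := by
  have h_frontier : μ'.map Z (frontier (Set.Iic x)) = 0 := by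
    refine measure_mono_null (frontier_Iic_subset x) ?_
    rwa [Measure.map_apply_of_aemeasurable h.aemeasurable_limit (measurableSet_singleton x)]
  have h_Iic := (ENNReal.tendsto_toReal (measure_ne_top (μ'.map Z) _)).comp
    (ProbabilityMeasure.tendsto_measure_of_null_frontier_of_tendsto' h.tendsto h_frontier)
  simp only [ProbabilityMeasure.coe_mk, Function.comp_def, measurableSet_Iic,
    Measure.map_apply_of_aemeasurable h.aemeasurable_limit,
    Measure.map_apply_of_aemeasurable (h.forall_aemeasurable _)] at h_Iic
  exact h_Iic

lemma charFun_map_binomial (n : ℕ) (p : I) (x y t : ℝ) :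
    charFun (Bin(n, p).map fun k : ℕ => (k : ℝ) * x + ((n : ℝ) - k) * y) t =
      charFun Ber(x, y, p) t ^ n := by
  rw [charFun_apply_real, charFun_apply_real, integral_bernoulliMeasure,
    integral_map (by fun_prop) (by fun_prop), integral_binomial, add_pow, Nat.range_succ_eq_Iic]
  refine Finset.sum_congr rfl fun k hk => ?_
  have h_exp : Complex.exp (t * (k * x + (n - k) * y) * Complex.I) =
      Complex.exp (t * x * Complex.I) ^ k * Complex.exp (t * y * Complex.I) ^ (n - k) := by
    rw [← Complex.exp_nat_mul, ← Complex.exp_nat_mul, ← Complex.exp_add,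
      Nat.cast_sub (Finset.mem_Iic.1 hk)]
    ring_nf
  simp only [Complex.real_smul]
  push_cast
  rw [h_exp, mul_pow, mul_pow]
  ring

lemma tendstoInDistribution_binomial_of_mean_variance {p : I} {x y : ℝ}
    (h_mean : p * x + (1 - p) * y = 0) (h_var : p * x ^ 2 + (1 - p) * y ^ 2 = 1) :
    TendstoInDistribution (fun (n k : ℕ) => (√n)⁻¹ * ((k : ℝ) * x + ((n : ℝ) - k) * y)) atTop id
      (fun n => Bin(n, p)) (gaussianReal 0 1) where
  forall_aemeasurable n := by fun_prop
  tendsto := by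
    refine ProbabilityMeasure.tendsto_iff_tendsto_charFun.2 fun t => ?_
    have h_clt := tendsto_charFun_inv_sqrt_mul_pow (P := Ber(x, y, p)) aemeasurable_id
      ((integral_bernoulliMeasure x y p id).trans h_mean)
      ((integral_bernoulliMeasure x y p (id ^ 2)).trans h_var) t
    simp only [ProbabilityMeasure.coe_mk, Measure.map_id, charFun_gaussianReal] at h_clt ⊢
    convert h_clt using 2 with n
    · rw [charFun_map_mul_comp (by fun_prop), charFun_map_binomial]
    · simp [neg_div]

lemma tendstoInDistribution_binomial {p : I} (hp : (p : ℝ) * (1 - p) ≠ 0) :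
    TendstoInDistribution (fun (n k : ℕ) => (√(n * (p * (1 - p))))⁻¹ * ((k : ℝ) - n * p)) atTop id
      (fun n => Bin(n, p)) (gaussianReal 0 1) := by
  have h_sq : √((p : ℝ) * (1 - p)) ^ 2 = p * (1 - p) :=
    Real.sq_sqrt (mul_nonneg p.2.1 (sub_nonneg.2 p.2.2))
  have h_sqrt : √((p : ℝ) * (1 - p)) ≠ 0 := by
    rwa [← pow_ne_zero_iff two_ne_zero, h_sq]
  convert tendstoInDistribution_binomial_of_mean_variance
    (p := p) (x := (1 - p) / √(p * (1 - p))) (y := -p / √(p * (1 - p))) ?_ ?_ using 3 with n k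
  · rw [Real.sqrt_mul n.cast_nonneg, mul_inv, mul_assoc]
    field_simp
    ring
  · ring
  · rw [div_pow, div_pow, h_sq, neg_sq]
    calc (p : ℝ) * ((1 - p) ^ 2 / (p * (1 - p))) + (1 - p) * (p ^ 2 / (p * (1 - p)))
      _ = p * (1 - p) / (p * (1 - p)) := by ring
      _ = 1 := div_self hp

lemma tendsto_binomial_real_le {p : I} (hp : (p : ℝ) * (1 - p) ≠ 0) (x : ℝ) :
    Tendsto (fun n : ℕ => Bin(n, p).real {k | (k : ℝ) ≤ n * p + x * √(n * (p * (1 - p)))}) atTop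
      (𝓝 ((gaussianReal 0 1).real (Set.Iic x))) := by
  have := nullSingletonClass_gaussianReal (μ := 0) one_ne_zero
  refine (tendsto_measureReal_le_of_tendstoInDistribution (tendstoInDistribution_binomial hp)
    (measure_singleton x)).congr' ?_
  filter_upwards [eventually_gt_atTop 0] with n hn
  have h_var_pos : 0 < (p : ℝ) * (1 - p) :=
    (mul_nonneg p.2.1 (sub_nonneg.2 p.2.2)).lt_of_ne' hp
  have h_pos : 0 < √(n * ((p : ℝ) * (1 - p))) :=
    Real.sqrt_pos.2 (mul_pos (Nat.cast_pos.2 hn) h_var_pos)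
  simp only [inv_mul_le_iff₀ h_pos, sub_le_iff_le_add', mul_comm x]

lemma gaussianReal_real_Iic (x : ℝ) :
    (gaussianReal 0 1).real (Set.Iic x) =
      1 / √(2 * Real.pi) * ∫ u in Set.Iic x, Real.exp (-u ^ 2 / 2) := by
  rw [measureReal_def, gaussianReal_apply_eq_integral _ one_ne_zero, ENNReal.toReal_ofReal
    (integral_nonneg fun _ => gaussianPDFReal_nonneg _ _ _), ← integral_const_mul]
  simp [gaussianPDFReal]

end DeMoivreLaplace

section HighestRoot

open MeasureTheory ProbabilityTheory unitInterval

/-- The success probability `1/2` of a fair coin, as a point of the unit interval. -/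
noncomputable def fairCoin : I := ⟨1 / 2, by norm_num, by norm_num⟩

lemma one_sub_fairCoin : 1 - (fairCoin : ℝ) = fairCoin := by norm_num [fairCoin]

lemma binomial_fairCoin_real (n : ℕ) (q : ℕ → Prop) [DecidablePred q] :
    Bin(n, fairCoin).real {k | q k} =
      (∑ k ∈ Finset.Iic n, if q k then (n.choose k : ℝ) else 0) / 2 ^ n := by
  rw [← integral_indicator_one .of_discrete, integral_binomial, Finset.sum_div]
  refine Finset.sum_congr rfl fun k hk => ?_
  rw [one_sub_fairCoin, mul_assoc, ← pow_add, Nat.add_sub_cancel' (Finset.mem_Iic.1 hk)]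
  simp [fairCoin, Set.indicator_apply, div_eq_mul_inv]

lemma tsum_NA_eq_binomial (n : ℕ) (q : ℕ → Prop) [DecidablePred q] :
    ∑' k, (if q k then (NA (n + 1) k (fun _ => 1) : ℝ) else 0) =
      2 ^ n * Bin(n, fairCoin).real {k | q (k + 1)} := by
  have h_support : ∀ k ∉ Finset.range (n + 1 + 1),
      (if q k then (NA (n + 1) k (fun _ => 1) : ℝ) else 0) = 0 := by
    intro k hk
    obtain ⟨j, rfl⟩ : ∃ j, k = j + 1 := ⟨k - 1, by grind⟩
    rw [NA_succ_succ_one, Nat.choose_eq_zero_of_lt (by grind), Nat.cast_zero, ite_self]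
  rw [binomial_fairCoin_real, mul_div_cancel₀ _ (by positivity), tsum_eq_sum h_support,
    Finset.sum_range_succ', Nat.range_succ_eq_Iic]
  simp only [NA_succ_succ_one, NA_succ_zero_one, Nat.cast_zero, ite_self, add_zero]

lemma tsum_NA_ratio_eq_binomial (n : ℕ) (q : ℕ → Prop) [DecidablePred q] :
    (∑' k, if q k then (NA (n + 1) k (fun _ => 1) : ℝ) else 0) /
      (∑' k, (NA (n + 1) k (fun _ => 1) : ℝ)) = Bin(n, fairCoin).real {k | q (k + 1)} := by
  have h_total : ∑' k, (NA (n + 1) k (fun _ => 1) : ℝ) = 2 ^ n := by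
    simpa using tsum_NA_eq_binomial n fun _ => True
  rw [tsum_NA_eq_binomial, h_total, mul_div_cancel_left₀ _ (by positivity)]

end HighestRoot

open Filter in
/-- Theorem 1.2, type `A_r` (Gaussian behavior): the normalized number of positive roots
used in the decompositions of the highest root `𝟙 = (1,…,1)` of `A_r`, with mean
`μ_r = (r+1)/2` and standard deviation `σ_r = √((r−1)/4)`, converges in distribution to
the standard normal as `r → ∞`. -/
theorem gaussian_highestRoot_typeA (x : ℝ) :
    Tendsto (fun r : ℕ =>
      (∑' k : ℕ, if (k : ℝ) ≤ ((r : ℝ) + 1) / 2 + x * Real.sqrt (((r : ℝ) - 1) / 4) then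
          (NA r k (fun _ => 1) : ℝ) else 0) /
        (∑' k : ℕ, (NA r k (fun _ => 1) : ℝ)))
      atTop
      (nhds ((1 / Real.sqrt (2 * Real.pi)) * ∫ u in Set.Iic x, Real.exp (-u ^ 2 / 2))) := by
  rw [← tendsto_add_atTop_iff_nat 1, ← gaussianReal_real_Iic]
  convert tendsto_binomial_real_le (p := fairCoin) (by norm_num [fairCoin]) x using 2 with n
  rw [tsum_NA_ratio_eq_binomial]
  congr 1
  ext k
  have h_mean : ((n + 1 : ℕ) + 1 : ℝ) / 2 = n * fairCoin + 1 := by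
    push_cast [fairCoin]
    ring
  have h_variance : ((n + 1 : ℕ) - 1 : ℝ) / 4 = n * (fairCoin * (1 - fairCoin)) := by
    push_cast [fairCoin]
    ring
  rw [Set.mem_ofPred_eq, Set.mem_ofPred_eq, h_mean, h_variance, Nat.cast_succ,
    add_right_comm, add_le_add_iff_right]
end

section
/- For r ≥ 2 let p_{r,k} = N^B_k(θ_B) be the number of decompositions of the highest root θ_B = (1,2,2,…,2) ∈ ℕ^r of B_r as a sum of exactly k positive roots, and set μ_r = (Σ_k k·p_{r,k})/(Σ_k p_{r,k}) and σ_r = √( (Σ_k k²·p_{r,k})/(Σ_k p_{r,k}) − μ_r² ). Then for every x ∈ ℝ: lim_{r→∞} (Σ_{k ∈ ℕ, k ≤ μ_r + x·σ_r} p_{r,k}) / (Σ_{k≥0} p_{r,k}) = (1/√(2π))·∫_{−∞}^x e^{−u²/2} du. That is, the normalized number of positive roots used in the decompositions of the highest root of B_r converges in distribution to the standard normal as r → ∞. -/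
open Polynomial

/-!
Write `ε_i = α_i + ⋯ + α_r`, so that the highest root is `ε_1 + ε_2`. Counting the decompositions
of a weight with the multiplicities of the roots that involve its leading coordinate relates the
generating functions of the weights `ε_i ± ε_j`, and these relations combine into a linear
recurrence of order two in `r` for the generating polynomials of the highest roots. Its
characteristic roots are `(1 + (1 + q) ^ 2 ± q * √(q ^ 2 + 4)) / 2`. At `q = exp z` with `z` near
`0` one of them, `L z`, dominates, so the moment generating functions are `A z * L z ^ r` up to an
exponentially small factor, as for a sum of `r` independent variables. The standardized
characteristic functions therefore converge to `exp (-t ^ 2 / 2)`, because `(log L)'' 0 = 13 / 25`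
is positive.
-/

/-! ### Decompositions by number of summands -/

section KostantPartitionFunction

open Finset PowerSeries

theorem exists_eq_add_single_of_apply_ne_zero {ι : Type*} {m : ι →₀ ℕ} {a : ι} (h : m a ≠ 0) :
    ∃ m' : ι →₀ ℕ, m = m' + Finsupp.single a 1 :=
  ⟨m - Finsupp.single a 1, (tsub_add_cancel_of_le <| by
    simpa [Finsupp.single_le_iff, Nat.one_le_iff_ne_zero] using h).symm⟩

variable {V : Type*} [AddCommMonoid V]

/-- The decompositions of `lam` into `k` summands from `S`, as multiplicity functions: the set
counted by Kostant's partition function, refined by the number of summands. -/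
noncomputable def decompositions (S : Finset V) (k : ℕ) (lam : V) : Finset (V →₀ ℕ) :=
  open Classical in
  {m ∈ S.finsuppAntidiag k | Finsupp.linearCombination ℕ id m = lam}

/-- The generating function of the number of decompositions of `lam` into elements of `S` by number
of summands (the `q`-analogue of Kostant's partition function). -/
noncomputable def kostantSeries (S : Finset V) (lam : V) : ℝ⟦X⟧ :=
  PowerSeries.mk fun k => (#(decompositions S k lam) : ℝ)

/-- The generating function, by number of summands, of the total multiplicity of the summand `a` in
the decompositions of `lam` into elements of `S`. -/
noncomputable def multiplicitySeries (S : Finset V) (a lam : V) : ℝ⟦X⟧ :=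
  PowerSeries.mk fun k => ∑ m ∈ decompositions S k lam, (m a : ℝ)

variable {S : Finset V} {a lam mu : V} {k : ℕ} {m : V →₀ ℕ}

theorem mem_decompositions :
    m ∈ decompositions S k lam ↔
      (∑ v ∈ S, m v = k ∧ m.support ⊆ S) ∧ Finsupp.linearCombination ℕ id m = lam := by
  simp [decompositions]

theorem add_single_mem_decompositions [IsCancelAdd V] (ha : a ∈ S) :
    m + Finsupp.single a 1 ∈ decompositions S (k + 1) (mu + a) ↔ m ∈ decompositions S k mu := by
  classical
  have hsupp : (m + Finsupp.single a 1).support ⊆ S ↔ m.support ⊆ S := by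
    simp only [subset_iff, Finsupp.mem_support_iff, Finsupp.add_apply]
    grind
  simp [mem_decompositions, hsupp, sum_add_distrib, Finsupp.single_apply, ha]

theorem multiplicitySeries_add_self [IsCancelAdd V] (ha : a ∈ S) :
    multiplicitySeries S a (mu + a) =
      PowerSeries.X * (kostantSeries S mu + multiplicitySeries S a mu) := by
  classical
  ext (_ | k)
  · simp only [multiplicitySeries, coeff_mk, coeff_zero_X_mul]
    refine sum_eq_zero fun m hm => ?_
    have hsum := (mem_decompositions.1 hm).1.1
    exact_mod_cast sum_eq_zero_iff.1 hsum a ha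
  · simp only [multiplicitySeries, kostantSeries, coeff_succ_X_mul, map_add, coeff_mk]
    rw [card_eq_sum_ones, Nat.cast_sum, ← sum_add_distrib]
    refine (sum_of_injOn (· + Finsupp.single a 1) (add_left_injective _).injOn
      (fun m hm => (add_single_mem_decompositions ha).2 hm) (fun m hm hm' => ?_)
      (fun m _ => by simp [add_comm])).symm
    by_contra h
    obtain ⟨m, rfl⟩ := exists_eq_add_single_of_apply_ne_zero (Nat.cast_ne_zero.1 h)
    exact hm' ⟨m, (add_single_mem_decompositions ha).1 hm, rfl⟩

theorem multiplicitySeries_eq_zero (h : ∀ mu, mu + a ≠ lam) : multiplicitySeries S a lam = 0 := by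
  ext k
  simp only [multiplicitySeries, coeff_mk, map_zero]
  refine sum_eq_zero fun m hm => ?_
  by_contra hma
  obtain ⟨m, rfl⟩ := exists_eq_add_single_of_apply_ne_zero (Nat.cast_ne_zero.1 hma)
  exact h (Finsupp.linearCombination ℕ id m) (by simpa using (mem_decompositions.1 hm).2)

theorem multiplicitySeries_eq_zero_of_lt {ι : Type*} {S : Finset (ι → ℕ)} {a lam : ι → ℕ} (t : ι)
    (h : lam t < a t) : multiplicitySeries S a lam = 0 := by
  refine multiplicitySeries_eq_zero ?_
  rintro mu rfl
  simp at h

theorem multiplicitySeries_of_add_eq {ι : Type*} {S : Finset (ι → ℕ)} {a lam mu : ι → ℕ}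
    (ha : a ∈ S) (hadd : mu + a = lam) (t : ι) (h : mu t < a t) :
    multiplicitySeries S a lam = PowerSeries.X * kostantSeries S mu := by
  rw [← hadd, multiplicitySeries_add_self ha, multiplicitySeries_eq_zero_of_lt t h, add_zero]

theorem sum_apply_mul_of_mem_decompositions (f : V →+ ℕ) (hm : m ∈ decompositions S k lam) :
    ∑ a ∈ S, m a * f a = f lam := by
  obtain ⟨⟨-, hS⟩, rfl⟩ := mem_decompositions.1 hm
  rw [Finsupp.linearCombination_apply, Finsupp.sum_of_support_subset m hS _ (by simp)]
  simp

theorem nsmul_kostantSeries (f : V →+ ℕ) :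
    f lam • kostantSeries S lam = ∑ a ∈ S, f a • multiplicitySeries S a lam := by
  ext k
  simp only [kostantSeries, multiplicitySeries, map_nsmul, map_sum, coeff_mk, smul_sum]
  rw [sum_comm, card_eq_sum_ones, Nat.cast_sum, smul_sum]
  refine sum_congr rfl fun m hm => ?_
  rw [← sum_apply_mul_of_mem_decompositions f hm]
  simp [mul_comm]

theorem kostantSeries_zero {f : V →+ ℕ} (hf : ∀ a ∈ S, f a ≠ 0) : kostantSeries S 0 = 1 := by
  have hdec (k : ℕ) : decompositions S k 0 = if k = 0 then {0} else ∅ := by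
    ext m
    suffices h : m ∈ decompositions S k 0 ↔ k = 0 ∧ m = 0 by split_ifs <;> simp_all
    refine ⟨fun hm => ?_, fun ⟨hk, hm⟩ => by simp [hk, hm, mem_decompositions]⟩
    have hzero : ∀ a ∈ S, m a = 0 := by
      simpa +contextual [hf] using sum_apply_mul_of_mem_decompositions f hm
    obtain ⟨⟨hk, hS⟩, -⟩ := mem_decompositions.1 hm
    refine ⟨by rw [← hk, sum_eq_zero hzero], Finsupp.ext fun a => ?_⟩
    by_contra ha
    exact ha (hzero a (hS (Finsupp.mem_support_iff.2 ha)))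
  ext k
  rw [kostantSeries, coeff_mk, hdec, PowerSeries.coeff_one]
  split_ifs <;> simp

end KostantPartitionFunction

/-! ### Quasi-powers -/

section Probability

open Filter Topology MeasureTheory ProbabilityTheory

theorem norm_sub_taylor_two_le {s : Set ℂ} (hs : Convex ℝ s) (hso : IsOpen s) {g : ℂ → ℂ}
    (hg : DifferentiableOn ℂ g s) {c : ℂ} {ε : ℝ} (hε : ∀ z ∈ s, ‖deriv (deriv g) z - c‖ ≤ ε)
    {w z : ℂ} (hw : w ∈ s) (hz : z ∈ s) :
    ‖g z - g w - deriv g w * (z - w) - c / 2 * (z - w) ^ 2‖ ≤ ε * ‖z - w‖ ^ 2 := by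
  have hdg : ∀ x ∈ s, HasDerivAt g (deriv g x) x := fun x hx =>
    (hg.differentiableAt (hso.mem_nhds hx)).hasDerivAt
  have hddg : ∀ x ∈ s, HasDerivAt (deriv g) (deriv (deriv g) x) x := fun x hx =>
    ((hg.deriv hso).differentiableAt (hso.mem_nhds hx)).hasDerivAt
  have hderiv : ∀ x ∈ s, ‖deriv g x - deriv g w - c * (x - w)‖ ≤ ε * ‖x - w‖ := by
    intro x hx
    have := hs.norm_image_sub_le_of_norm_hasDerivWithin_le (f := fun x => deriv g x - c * x)
      (fun x hx => ((hddg x hx).sub ((hasDerivAt_id x).const_mul c)).hasDerivWithinAt)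
      (by simpa using hε) hw hx
    calc _ = ‖deriv g x - c * x - (deriv g w - c * w)‖ := by ring_nf
      _ ≤ _ := this
  have hseg : segment ℝ w z ⊆ s := hs.segment_subset hw hz
  have := (convex_segment w z).norm_image_sub_le_of_norm_hasDerivWithin_le
    (f := fun x => g x - deriv g w * x - c / 2 * (x - w) ^ 2) (C := ε * ‖z - w‖)
    (fun x hx => (((hdg x (hseg hx)).sub ((hasDerivAt_id x).const_mul (deriv g w))).sub
      ((((hasDerivAt_id x).sub_const w).pow 2).const_mul (c / 2))).hasDerivWithinAt)
    (fun x hx => ?_) (left_mem_segment ℝ w z) (right_mem_segment ℝ w z)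
  · calc _ = ‖g z - deriv g w * z - c / 2 * (z - w) ^ 2 -
          (g w - deriv g w * w - c / 2 * (w - w) ^ 2)‖ := by ring_nf
      _ ≤ ε * ‖z - w‖ * ‖z - w‖ := this
      _ = _ := by ring
  · have hε₀ : 0 ≤ ε := (norm_nonneg _).trans (hε w hw)
    calc _ = ‖deriv g x - deriv g w - c * (x - w)‖ := by
          simp only [id_eq, Nat.cast_ofNat, Nat.add_one_sub_one, pow_one, mul_one]
          ring_nf
      _ ≤ ε * ‖x - w‖ := hderiv x (hseg hx)
      _ ≤ ε * ‖z - w‖ := by gcongr; exact norm_sub_le_of_mem_segment hx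

theorem tendsto_cdf_of_tendsto_charFun {μ : ℕ → Measure ℝ} [∀ n, IsProbabilityMeasure (μ n)]
    {ν : Measure ℝ} [IsProbabilityMeasure ν] [NullSingletonClass ν]
    (h : ∀ t, Tendsto (fun n => charFun (μ n) t) atTop (𝓝 (charFun ν t))) (x : ℝ) :
    Tendsto (fun n => cdf (μ n) x) atTop (𝓝 (cdf ν x)) := by
  let P (n : ℕ) : ProbabilityMeasure ℝ := ⟨μ n, inferInstance⟩
  let Q : ProbabilityMeasure ℝ := ⟨ν, inferInstance⟩
  have hweak : Tendsto P atTop (𝓝 Q) := ProbabilityMeasure.tendsto_of_tendsto_charFun h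
  have hIic := ProbabilityMeasure.tendsto_measure_of_null_frontier_of_tendsto' hweak
    (E := Set.Iic x) (by rw [frontier_Iic]; exact measure_singleton (μ := ν) x)
  simp only [cdf_eq_real]
  exact (ENNReal.tendsto_toReal (measure_ne_top ν _)).comp hIic

theorem cdf_gaussianReal_zero_one (x : ℝ) :
    cdf (gaussianReal 0 1) x =
      (1 / Real.sqrt (2 * Real.pi)) * ∫ u in Set.Iic x, Real.exp (-u ^ 2 / 2) := by
  rw [cdf_eq_real, measureReal_def, gaussianReal_apply_eq_integral 0 one_ne_zero,
    ENNReal.toReal_ofReal (integral_nonneg fun _ => gaussianPDFReal_nonneg _ _ _),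
    ← integral_const_mul]
  simp [gaussianPDFReal]

section Cumulants

variable {Ω : Type*} [MeasurableSpace Ω] {P : Measure Ω} {X : Ω → ℝ} {K : ℂ → ℂ}

theorem deriv_complexMGF_zero (h₀ : 0 ∈ interior (integrableExpSet X P)) :
    deriv (complexMGF X P) 0 = (∫ ω, X ω ∂P : ℝ) := by
  rw [← iteratedDeriv_one, iteratedDeriv_complexMGF h₀]
  simp [integral_complex_ofReal]

theorem deriv_deriv_complexMGF_zero (h₀ : 0 ∈ interior (integrableExpSet X P)) :
    deriv (deriv (complexMGF X P)) 0 = (∫ ω, X ω ^ 2 ∂P : ℝ) := by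
  have h := iteratedDeriv_complexMGF (z := 0) h₀ 2
  rw [iteratedDeriv_succ, iteratedDeriv_one] at h
  simp [h, ← integral_complex_ofReal]

theorem charFun_map_sub_div (hX : AEMeasurable X P) (m σ t : ℝ) :
    charFun (P.map fun ω => (X ω - m) / σ) t =
      Complex.exp (-(m * (t / σ * Complex.I))) * complexMGF X P (t / σ * Complex.I) := by
  rw [charFun_apply_real, integral_map ((hX.sub_const m).div_const σ) (by fun_prop), complexMGF,
    ← integral_const_mul]
  refine integral_congr_ae (.of_forall fun ω => ?_)
  simp only [← Complex.exp_add]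
  push_cast
  ring_nf

variable [IsProbabilityMeasure P]

theorem complexMGF_zero : complexMGF X P 0 = 1 := by
  simp [complexMGF]

theorem deriv_eq_integral_of_complexMGF_eq_exp (h₀ : 0 ∈ interior (integrableExpSet X P))
    (hK : DifferentiableAt ℂ K 0) (h : complexMGF X P =ᶠ[𝓝 0] fun z => Complex.exp (K z)) :
    deriv K 0 = (∫ ω, X ω ∂P : ℝ) := by
  have hone : Complex.exp (K 0) = 1 := by rw [← h.eq_of_nhds, complexMGF_zero]
  rw [← deriv_complexMGF_zero h₀, h.deriv_eq, deriv_cexp hK, hone, one_mul]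

theorem deriv_deriv_eq_variance_of_complexMGF_eq_exp (h₀ : 0 ∈ interior (integrableExpSet X P))
    (hK : AnalyticAt ℂ K 0) (h : complexMGF X P =ᶠ[𝓝 0] fun z => Complex.exp (K z)) :
    deriv (deriv K) 0 = (Var[X; P] : ℝ) := by
  have hone : Complex.exp (K 0) = 1 := by rw [← h.eq_of_nhds, complexMGF_zero]
  have hderiv : deriv (complexMGF X P) =ᶠ[𝓝 0] fun z => Complex.exp (K z) * deriv K z := by
    filter_upwards [h.deriv, hK.eventually_analyticAt] with z hz hKz
    rw [hz, deriv_cexp hKz.differentiableAt]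
  have hsecond := deriv_deriv_complexMGF_zero h₀
  rw [hderiv.deriv_eq, deriv_fun_mul hK.differentiableAt.cexp hK.deriv.differentiableAt,
    deriv_cexp hK.differentiableAt, hone,
    deriv_eq_integral_of_complexMGF_eq_exp h₀ hK.differentiableAt h] at hsecond
  rw [variance_eq_sub (memLp_of_mem_interior_integrableExpSet h₀ 2)]
  push_cast
  linear_combination hsecond

end Cumulants

theorem isLittleO_sub_taylor_one {ι : Type*} {l : Filter ι} {U : Set ℂ} (hU : IsOpen U) {w : ℂ}
    (hw : w ∈ U) {g : ι → ℂ → ℂ} {u : ℂ → ℂ} (hg : ∀ᶠ n in l, DifferentiableOn ℂ (g n) U)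
    (hgu : TendstoLocallyUniformlyOn g u l U) {z : ι → ℂ} (hz : Tendsto z l (𝓝 w)) :
    (fun n => g n (z n) - g n w - deriv (g n) w * (z n - w) -
      deriv (deriv u) w / 2 * (z n - w) ^ 2) =o[l] fun n => (z n - w) ^ 2 := by
  obtain rfl | hl := l.eq_or_neBot
  · simp [Asymptotics.isLittleO_iff]
  have hu := hgu.differentiableOn hg hU
  have hddu := (hgu.deriv hg hU).deriv (hg.mono fun n hn => hn.deriv hU) hU
  have hcont : ContinuousAt (deriv (deriv u)) w :=
    (((hu.deriv hU).deriv hU).differentiableAt (hU.mem_nhds hw)).continuousAt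
  refine Asymptotics.isLittleO_iff.2 fun ε hε => ?_
  obtain ⟨t, ht, hclose⟩ := Metric.tendstoLocallyUniformlyOn_iff.1 hddu (ε / 2) (by positivity) w hw
  rw [hU.nhdsWithin_eq hw] at ht
  obtain ⟨δ, hδ, hball⟩ := Metric.mem_nhds_iff.1 <| inter_mem (inter_mem ht (hU.mem_nhds hw))
    (hcont.preimage_mem_nhds (Metric.ball_mem_nhds _ (half_pos hε)))
  filter_upwards [hclose, hg, hz (Metric.ball_mem_nhds w hδ)] with n hn hgn hzn
  rw [norm_pow]
  refine norm_sub_taylor_two_le (convex_ball w δ) Metric.isOpen_ball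
    (hgn.mono fun y hy => (hball hy).1.2) (fun y hy => ?_) (Metric.mem_ball_self hδ) hzn
  have h₁ := hn y (hball hy).1.1
  have h₂ : dist (deriv (deriv u) y) (deriv (deriv u) w) < ε / 2 := (hball hy).2
  rw [← dist_eq_norm]
  calc _ ≤ dist (deriv (deriv u) y) (deriv (deriv (g n)) y) +
        dist (deriv (deriv u) y) (deriv (deriv u) w) := dist_triangle_left _ _ _
    _ ≤ ε := by simp only [Function.comp_apply] at h₁; linarith

theorem tendsto_mul_sub_taylor_one {ι : Type*} {l : Filter ι} {U : Set ℂ} (hU : IsOpen U) {w : ℂ}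
    (hw : w ∈ U) {g : ι → ℂ → ℂ} {u : ℂ → ℂ} (hg : ∀ᶠ n in l, DifferentiableOn ℂ (g n) U)
    (hgu : TendstoLocallyUniformlyOn g u l U) {z : ι → ℂ} (hz : Tendsto z l (𝓝 w)) {φ : ι → ℂ}
    {L : ℂ} (hφ : Tendsto (fun n => φ n * (z n - w) ^ 2) l (𝓝 L)) :
    Tendsto (fun n => φ n * (g n (z n) - g n w - deriv (g n) w * (z n - w))) l
      (𝓝 (deriv (deriv u) w / 2 * L)) := by
  have hrem := ((Asymptotics.isBigO_refl φ l).mul_isLittleO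
    (isLittleO_sub_taylor_one hU hw hg hgu hz)).trans_isBigO (hφ.isBigO_one ℂ)
  have hlim := (Asymptotics.isLittleO_one_iff ℂ |>.1 hrem).add
    (hφ.const_mul (deriv (deriv u) w / 2))
  rw [zero_add] at hlim
  exact hlim.congr fun n => by ring

theorem tendsto_mul_div_sqrt_mul_I_sq {ι : Type*} {l : Filter ι} {φ V : ι → ℝ} {v : ℝ}
    (hV : ∀ n, 0 ≤ V n) (h : Tendsto (fun n => V n / φ n) l (𝓝 v)) (hv : v ≠ 0) (t : ℝ) :
    Tendsto (fun n => (φ n : ℂ) * (t / √(V n) * Complex.I) ^ 2) l (𝓝 (-t ^ 2 / v)) := by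
  have hlim := (Complex.continuous_ofReal.tendsto _).comp
    ((tendsto_const_nhds (x := -t ^ 2)).div h hv)
  push_cast at hlim
  refine hlim.congr fun n => ?_
  have hsq : (√(V n) : ℂ) ^ 2 = V n := by exact_mod_cast Real.sq_sqrt (hV n)
  rw [mul_pow, div_pow, hsq, Complex.I_sq]
  simp only [Function.comp_apply, Pi.div_apply]
  push_cast
  rw [div_div_eq_mul_div]
  ring

section Bryc

variable {Ω : ℕ → Type*} [∀ n, MeasurableSpace (Ω n)] {P : ∀ n, Measure (Ω n)}
  [∀ n, IsProbabilityMeasure (P n)] {X : ∀ n, Ω n → ℝ} {U : Set ℂ} {φ : ℕ → ℝ} {g : ℕ → ℂ → ℂ}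
  {u : ℂ → ℂ} {v : ℝ}

theorem tendsto_variance_div (h₀ : ∀ n, 0 ∈ interior (integrableExpSet (X n) (P n)))
    (hU : IsOpen U) (h₀U : 0 ∈ U) (hφ : Tendsto φ atTop atTop)
    (hg : ∀ᶠ n in atTop, DifferentiableOn ℂ (g n) U)
    (hgu : TendstoLocallyUniformlyOn g u atTop U)
    (hmgf : ∀ᶠ n in atTop, ∀ z ∈ U, complexMGF (X n) (P n) z = Complex.exp (φ n * g n z))
    (hv : deriv (deriv u) 0 = v) :
    Tendsto (fun n => Var[X n; P n] / φ n) atTop (𝓝 v) := by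
  have hdd := ((hgu.deriv hg hU).deriv (hg.mono fun n hn => hn.deriv hU) hU).tendsto_at h₀U
  rw [hv] at hdd
  refine ((Complex.continuous_re.tendsto _).comp hdd).congr' ?_
  filter_upwards [hg, hmgf, hφ.eventually_gt_atTop 0] with n hgn hmgfn hφn
  have hvar := deriv_deriv_eq_variance_of_complexMGF_eq_exp (K := fun z => φ n * g n z) (h₀ n)
    (analyticAt_const.mul (hgn.analyticAt (hU.mem_nhds h₀U)))
    (eventually_of_mem (hU.mem_nhds h₀U) hmgfn)
  simp only [deriv_const_mul_field'] at hvar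
  have hdiv : deriv (deriv (g n)) 0 = ((Var[X n; P n] / φ n : ℝ) : ℂ) := by
    rw [Complex.ofReal_div, ← hvar, mul_div_cancel_left₀ _ (Complex.ofReal_ne_zero.2 hφn.ne')]
  simp only [Function.comp_apply, hdiv, Complex.ofReal_re]

theorem charFun_standardization_eq_exp {n : ℕ} (h₀ : 0 ∈ interior (integrableExpSet (X n) (P n)))
    (hU : U ∈ 𝓝 0) (hg : DifferentiableOn ℂ (g n) U)
    (hmgf : ∀ z ∈ U, complexMGF (X n) (P n) z = Complex.exp (φ n * g n z)) {σ t : ℝ}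
    (hz : (t / σ * Complex.I : ℂ) ∈ U) :
    charFun ((P n).map fun ω => (X n ω - (P n)[X n]) / σ) t =
      Complex.exp (φ n * (g n (t / σ * Complex.I) - g n 0 -
        deriv (g n) 0 * (t / σ * Complex.I - 0))) := by
  have hmean := deriv_eq_integral_of_complexMGF_eq_exp h₀
    ((hg.differentiableAt hU).const_mul (φ n : ℂ)) (eventually_of_mem hU hmgf)
  rw [deriv_const_mul_field'] at hmean
  have hone : Complex.exp (φ n * g n 0) = 1 := by
    rw [← hmgf 0 (mem_of_mem_nhds hU), complexMGF_zero]
  rw [charFun_map_sub_div (aemeasurable_of_mem_interior_integrableExpSet h₀), hmgf _ hz, ← hmean,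
    ← Complex.exp_add, ← mul_one (Complex.exp _), ← inv_one, ← hone, ← Complex.exp_neg,
    ← Complex.exp_add]
  ring_nf

theorem tendsto_charFun_standardization (h₀ : ∀ n, 0 ∈ interior (integrableExpSet (X n) (P n)))
    (hU : IsOpen U) (h₀U : 0 ∈ U) (hφ : Tendsto φ atTop atTop)
    (hg : ∀ᶠ n in atTop, DifferentiableOn ℂ (g n) U)
    (hgu : TendstoLocallyUniformlyOn g u atTop U)
    (hmgf : ∀ᶠ n in atTop, ∀ z ∈ U, complexMGF (X n) (P n) z = Complex.exp (φ n * g n z))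
    (hv₀ : 0 < v) (hv : deriv (deriv u) 0 = v) (t : ℝ) :
    Tendsto (fun n => charFun
        ((P n).map fun ω => (X n ω - (P n)[X n]) / √Var[X n; P n]) t) atTop
      (𝓝 (charFun (gaussianReal 0 1) t)) := by
  have hvar := tendsto_variance_div h₀ hU h₀U hφ hg hgu hmgf hv
  have hsqrt : Tendsto (fun n => √Var[X n; P n]) atTop atTop := by
    refine Real.tendsto_sqrt_atTop.comp ((hφ.atTop_mul_pos hv₀ hvar).congr' ?_)
    filter_upwards [hφ.eventually_gt_atTop 0] with n hn using mul_div_cancel₀ _ hn.ne'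
  have hz : Tendsto (fun n => (t / √Var[X n; P n] * Complex.I : ℂ)) atTop (𝓝 0) := by
    have := ((Complex.continuous_ofReal.tendsto 0).comp
      (tendsto_const_nhds (x := t).div_atTop hsqrt)).mul_const Complex.I
    simpa [Function.comp_def] using this
  have hz₂ : Tendsto (fun n => (φ n : ℂ) * (t / √Var[X n; P n] * Complex.I - 0) ^ 2) atTop
      (𝓝 (-t ^ 2 / v : ℂ)) := by
    simpa only [sub_zero] using
      tendsto_mul_div_sqrt_mul_I_sq (fun n => variance_nonneg (X n) (P n)) hvar hv₀.ne' t
  have hexp := (Complex.continuous_exp.tendsto _).comp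
    (tendsto_mul_sub_taylor_one hU h₀U hg hgu hz hz₂)
  have hlim : charFun (gaussianReal 0 1) t =
      Complex.exp (deriv (deriv u) 0 / 2 * (-t ^ 2 / v : ℂ)) := by
    have : (v : ℂ) ≠ 0 := Complex.ofReal_ne_zero.2 hv₀.ne'
    rw [charFun_gaussianReal, hv]
    congr 1
    push_cast
    field_simp
    ring
  rw [hlim]
  refine hexp.congr' ?_
  filter_upwards [hg, hmgf, hz (hU.mem_nhds h₀U)] with n hgn hmgfn hzn
  exact (charFun_standardization_eq_exp (h₀ n) (hU.mem_nhds h₀U) hgn hmgfn hzn).symm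

theorem tendsto_measureReal_le_of_complexMGF_eq_exp
    (h₀ : ∀ n, 0 ∈ interior (integrableExpSet (X n) (P n)))
    (hU : IsOpen U) (h₀U : 0 ∈ U) (hφ : Tendsto φ atTop atTop)
    (hg : ∀ᶠ n in atTop, DifferentiableOn ℂ (g n) U)
    (hgu : TendstoLocallyUniformlyOn g u atTop U)
    (hmgf : ∀ᶠ n in atTop, ∀ z ∈ U, complexMGF (X n) (P n) z = Complex.exp (φ n * g n z))
    (hv₀ : 0 < v) (hv : deriv (deriv u) 0 = v) (x : ℝ) :
    Tendsto (fun n => (P n).real {ω | X n ω ≤ (P n)[X n] + x * √Var[X n; P n]}) atTop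
      (𝓝 (cdf (gaussianReal 0 1) x)) := by
  have hmeas (n : ℕ) : AEMeasurable (fun ω => (X n ω - (P n)[X n]) / √Var[X n; P n]) (P n) :=
    ((aemeasurable_of_mem_interior_integrableExpSet (h₀ n)).sub_const _).div_const _
  have (n : ℕ) := Measure.isProbabilityMeasure_map (hmeas n)
  have := nullSingletonClass_gaussianReal (μ := 0) (v := 1) one_ne_zero
  refine (tendsto_cdf_of_tendsto_charFun
    (tendsto_charFun_standardization h₀ hU h₀U hφ hg hgu hmgf hv₀ hv) x).congr' ?_
  have hvar := tendsto_variance_div h₀ hU h₀U hφ hg hgu hmgf hv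
  filter_upwards [hφ.eventually_gt_atTop 0, hvar.eventually_const_lt hv₀] with n hφn hn
  have hpos : 0 < √Var[X n; P n] := Real.sqrt_pos.2 ((div_pos_iff_of_pos_right hφn).1 hn)
  rw [cdf_eq_real, map_measureReal_apply_of_aemeasurable (hmeas n) measurableSet_Iic]
  congr 1
  ext ω
  simp only [Set.mem_preimage, Set.mem_Iic, Set.mem_ofPred_eq, div_le_iff₀ hpos, sub_le_iff_le_add']

end Bryc

section QuasiPowers

variable {Ω : ℕ → Type*} [∀ n, MeasurableSpace (Ω n)] {P : ∀ n, Measure (Ω n)}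
  [∀ n, IsProbabilityMeasure (P n)] {X : ∀ n, Ω n → ℝ} {v : ℝ}

theorem deriv_deriv_log_eq {L : ℂ → ℂ} {w : ℂ} (hL : AnalyticAt ℂ L w)
    (hslit : L w ∈ Complex.slitPlane) :
    deriv (deriv fun z => Complex.log (L z)) w = deriv (logDeriv L) w := by
  refine EventuallyEq.deriv_eq ?_
  filter_upwards [hL.eventually_analyticAt,
    hL.continuousAt.preimage_mem_nhds (Complex.isOpen_slitPlane.mem_nhds hslit)] with z hz hzs
  exact (hz.differentiableAt.hasDerivAt.clog hzs).deriv

theorem deriv_logDeriv_eq {l l' : ℂ → ℂ} {l'' w : ℂ} (hl : ∀ᶠ z in 𝓝 w, HasDerivAt l (l' z) z)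
    (hl' : HasDerivAt l' l'' w) (hw : l w ≠ 0) :
    deriv (logDeriv l) w = (l'' * l w - l' w ^ 2) / l w ^ 2 := by
  have heq : logDeriv l =ᶠ[𝓝 w] fun z => l' z / l z := by
    filter_upwards [hl] with z hz
    rw [logDeriv_apply, hz.deriv]
  rw [heq.deriv_eq, (hl'.fun_div hl.self_of_nhds hw).deriv, sq (l' w)]

theorem tendstoUniformlyOn_add_log_div {A : ℕ → ℂ → ℂ} {U : Set ℂ} (u : ℂ → ℂ)
    (hA : ∀ᶠ n in atTop, ∀ z ∈ U, ‖A n z - 1‖ ≤ 1 / 2) :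
    TendstoUniformlyOn (fun (n : ℕ) z => u z + Complex.log (A n z) / n) u atTop U := by
  refine Metric.tendstoUniformlyOn_iff.2 fun ε hε => ?_
  filter_upwards [hA, (tendsto_const_div_atTop_nhds_zero_nat (3 / 4 : ℝ)).eventually_lt_const hε]
    with n hn hnε z hz
  have hlog := Complex.norm_log_one_add_half_le_self (hn z hz)
  rw [add_sub_cancel] at hlog
  rw [dist_self_add_right, norm_div, Complex.norm_natCast]
  refine lt_of_le_of_lt ?_ hnε
  gcongr
  linarith [hn z hz]

theorem tendsto_measureReal_le_of_complexMGF_eq_pow_mul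
    (h₀ : ∀ n, 0 ∈ interior (integrableExpSet (X n) (P n))) {L : ℂ → ℂ} (hL : AnalyticAt ℂ L 0)
    (hL₁ : L 0 = 1) {A : ℕ → ℂ → ℂ} (hA : ∀ᶠ z in 𝓝 0, ∀ n, DifferentiableAt ℂ (A n) z)
    (hA₁ : Tendsto (fun p : ℕ × ℂ => A p.1 p.2) (atTop ×ˢ 𝓝 0) (𝓝 1))
    (hmgf : ∀ᶠ z in 𝓝 0, ∀ n, complexMGF (X n) (P n) z = L z ^ n * A n z)
    (hv₀ : 0 < v) (hv : deriv (logDeriv L) 0 = v) (x : ℝ) :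
    Tendsto (fun n => (P n).real {ω | X n ω ≤ (P n)[X n] + x * √Var[X n; P n]}) atTop
      (𝓝 (cdf (gaussianReal 0 1) x)) := by
  have hslit : L 0 ∈ Complex.slitPlane := hL₁ ▸ Complex.one_mem_slitPlane
  obtain ⟨pn, hpn, pz, hpz, hclose⟩ := eventually_prod_iff.1
    (hA₁.eventually (Metric.closedBall_mem_nhds 1 (show (0 : ℝ) < 1 / 2 by norm_num)))
  have hgood := hpz.and <| hA.and <| hmgf.and <| hL.eventually_analyticAt.and <|
    hL.continuousAt.preimage_mem_nhds (Complex.isOpen_slitPlane.mem_nhds hslit)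
  obtain ⟨U, hUgood, hU, h₀U⟩ := eventually_nhds_iff.1 hgood
  have hA₂ : ∀ᶠ n in atTop, ∀ z ∈ U, ‖A n z - 1‖ ≤ 1 / 2 := by
    filter_upwards [hpn] with n hn z hz
    simpa [dist_eq_norm] using hclose hn (hUgood z hz).1
  have hAslit {n : ℕ} {z : ℂ} (h : ‖A n z - 1‖ ≤ 1 / 2) : A n z ∈ Complex.slitPlane := by
    have := Complex.mem_slitPlane_of_norm_lt_one (h.trans_lt (by norm_num))
    rwa [add_sub_cancel] at this
  refine tendsto_measureReal_le_of_complexMGF_eq_exp h₀ hU h₀U tendsto_natCast_atTop_atTop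
    ?_ (tendstoUniformlyOn_add_log_div (fun z => Complex.log (L z)) hA₂).tendstoLocallyUniformlyOn
    ?_ hv₀ ((deriv_deriv_log_eq hL hslit).trans hv) x
  · filter_upwards [hA₂] with n hn z hz
    obtain ⟨-, hAz, -, hLz, hLslit⟩ := hUgood z hz
    exact ((hLz.differentiableAt.clog hLslit).add
      (((hAz n).clog (hAslit (hn z hz))).div_const _)).differentiableWithinAt
  · filter_upwards [hA₂, eventually_ne_atTop 0] with n hn hn₀ z hz
    obtain ⟨-, -, hmgfz, -, hLslit⟩ := hUgood z hz
    have hn₁ : (n : ℂ) ≠ 0 := Nat.cast_ne_zero.2 hn₀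
    rw [hmgfz n, Complex.ofReal_natCast, mul_add, mul_div_cancel₀ _ hn₁, Complex.exp_add,
      Complex.exp_nat_mul, Complex.exp_log (Complex.slitPlane_ne_zero hLslit),
      Complex.exp_log (Complex.slitPlane_ne_zero (hAslit (hn z hz)))]

theorem tendsto_pow_prod_nhds_zero {𝕜 E : Type*} [NormedField 𝕜] [TopologicalSpace E] {ρ : E → 𝕜}
    {w : E} (hρ : ContinuousAt ρ w) (hlt : ‖ρ w‖ < 1) :
    Tendsto (fun p : ℕ × E => ρ p.2 ^ p.1) (atTop ×ˢ 𝓝 w) (𝓝 0) := by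
  obtain ⟨r, hr, hr₁⟩ := exists_between hlt
  have hpow : Tendsto (fun p : ℕ × E => r ^ p.1) (atTop ×ˢ 𝓝 w) (𝓝 0) :=
    (tendsto_pow_atTop_nhds_zero_of_lt_one ((norm_nonneg _).trans hr.le) hr₁).comp tendsto_fst
  refine squeeze_zero_norm' ?_ hpow
  filter_upwards [tendsto_snd.eventually (hρ.norm.eventually_le_const hr)] with p hp
  rw [norm_pow]
  gcongr

theorem tendsto_measureReal_le_of_complexMGF_eq_add_pow
    (h₀ : ∀ n, 0 ∈ interior (integrableExpSet (X n) (P n))) {f g l k : ℂ → ℂ}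
    (hf : AnalyticAt ℂ f 0) (hg : AnalyticAt ℂ g 0) (hl : AnalyticAt ℂ l 0)
    (hk : AnalyticAt ℂ k 0) (hkl : ‖k 0‖ < ‖l 0‖) (hf₀ : f 0 ≠ 0)
    (hmgf : ∀ᶠ z in 𝓝 0, ∀ n, complexMGF (X n) (P n) z =
      (f z * l z ^ n + g z * k z ^ n) / (f 0 * l 0 ^ n + g 0 * k 0 ^ n))
    (hv₀ : 0 < v) (hv : deriv (logDeriv l) 0 = v) (x : ℝ) :
    Tendsto (fun n => (P n).real {ω | X n ω ≤ (P n)[X n] + x * √Var[X n; P n]}) atTop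
      (𝓝 (cdf (gaussianReal 0 1) x)) := by
  have hl₀ : l 0 ≠ 0 := norm_pos_iff.1 ((norm_nonneg _).trans_lt hkl)
  let ρ : ℂ → ℂ := k / l
  have hρ : AnalyticAt ℂ ρ 0 := hk.div hl hl₀
  have hρ₀ : ‖ρ 0‖ < 1 := by
    simpa only [ρ, Pi.div_apply, norm_div] using (div_lt_one (norm_pos_iff.2 hl₀)).2 hkl
  let B (n : ℕ) (z : ℂ) : ℂ := f z + g z * ρ z ^ n
  have hB : Tendsto (fun p : ℕ × ℂ => B p.1 p.2) (atTop ×ˢ 𝓝 0) (𝓝 (f 0)) := by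
    simpa using (hf.continuousAt.tendsto.comp tendsto_snd).add
      ((hg.continuousAt.tendsto.comp tendsto_snd).mul
        (tendsto_pow_prod_nhds_zero hρ.continuousAt hρ₀))
  have hB₀ : Tendsto (fun p : ℕ × ℂ => B p.1 0) (atTop ×ˢ 𝓝 0) (𝓝 (f 0)) :=
    hB.comp (tendsto_fst.prodMk (tendsto_const_nhds (x := (0 : ℂ))))
  have hlogDeriv : deriv (logDeriv fun z => l z / l 0) 0 = v := by
    rw [← hv]
    refine EventuallyEq.deriv_eq (.of_forall fun z => ?_)
    simp only [div_eq_mul_inv]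
    exact logDeriv_mul_const z (l 0)⁻¹ (inv_ne_zero hl₀)
  refine tendsto_measureReal_le_of_complexMGF_eq_pow_mul h₀ (L := fun z => l z / l 0)
    hl.div_const (div_self hl₀) (A := fun n z => B n z / B n 0) ?_ ?_ ?_ hv₀ hlogDeriv x
  · filter_upwards [hf.eventually_analyticAt, hg.eventually_analyticAt, hρ.eventually_analyticAt]
      with z hfz hgz hρz n
    exact ((hfz.add (hgz.mul (hρz.pow n))).div_const).differentiableAt
  · rw [← div_self hf₀]
    exact hB.div hB₀ hf₀
  · filter_upwards [hmgf, hl.continuousAt.eventually_ne hl₀] with z hz hlz n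
    have hfactor (w : ℂ) (hw : l w ≠ 0) : f w * l w ^ n + g w * k w ^ n = l w ^ n * B n w := by
      simp only [B, ρ, Pi.div_apply, div_pow]
      field_simp
    rw [hz n, hfactor z hlz, hfactor 0 hl₀, mul_div_mul_comm, div_pow]

end QuasiPowers

end Probability

section CoeffMeasure

open MeasureTheory ProbabilityTheory

/-- The probability measure on `ℕ` whose weights are the normalized coefficients of `p`, meant for
`p` with nonnegative coefficients and `0 < p.eval 1`. -/
noncomputable def coeffMeasure (p : ℝ[X]) : Measure ℕ :=
  ∑ k ∈ p.support, ENNReal.ofReal (p.coeff k / p.eval 1) • Measure.dirac k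

variable {p : ℝ[X]}

theorem integrable_coeffMeasure {E : Type*} [NormedAddCommGroup E] (f : ℕ → E) :
    Integrable f (coeffMeasure p) := by
  rw [coeffMeasure, integrable_finsetSum_measure]
  exact fun k _ => (integrable_dirac (by simp)).smul_measure ENNReal.ofReal_ne_top

theorem zero_mem_interior_integrableExpSet_coeffMeasure (p : ℝ[X]) (f : ℕ → ℝ) :
    0 ∈ interior (integrableExpSet f (coeffMeasure p)) := by
  rw [show integrableExpSet f (coeffMeasure p) = Set.univ from
    Set.eq_univ_of_forall fun _ => integrable_coeffMeasure _, interior_univ]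
  trivial

theorem integral_coeffMeasure {E : Type*} [NormedAddCommGroup E] [NormedSpace ℝ E] [CompleteSpace E]
    (hp : ∀ k, 0 ≤ p.coeff k) (hp₁ : 0 < p.eval 1) (f : ℕ → E) :
    ∫ k, f k ∂coeffMeasure p = (p.eval 1)⁻¹ • ∑ k ∈ p.support, p.coeff k • f k := by
  rw [coeffMeasure, integral_finsetSum_measure fun k _ =>
    (integrable_dirac (by simp)).smul_measure ENNReal.ofReal_ne_top, Finset.smul_sum]
  refine Finset.sum_congr rfl fun k _ => ?_
  rw [integral_smul_measure, integral_dirac, ENNReal.toReal_ofReal (div_nonneg (hp k) hp₁.le),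
    smul_smul, div_eq_inv_mul]

theorem isProbabilityMeasure_coeffMeasure (hp : ∀ k, 0 ≤ p.coeff k) (hp₁ : 0 < p.eval 1) :
    IsProbabilityMeasure (coeffMeasure p) := by
  have hone := integral_coeffMeasure hp hp₁ fun _ => (1 : ℝ)
  simp only [integral_const, smul_eq_mul, mul_one] at hone
  have heval : p.eval 1 = ∑ k ∈ p.support, p.coeff k := by
    simp only [eval_eq_sum, Polynomial.sum, one_pow, mul_one]
  rw [isProbabilityMeasure_iff_real, hone, ← heval, inv_mul_cancel₀ hp₁.ne']

theorem complexMGF_coeffMeasure (hp : ∀ k, 0 ≤ p.coeff k) (hp₁ : 0 < p.eval 1) (z : ℂ) :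
    complexMGF (fun k : ℕ => (k : ℝ)) (coeffMeasure p) z =
      aeval (Complex.exp z) p / (p.eval 1 : ℝ) := by
  rw [complexMGF, integral_coeffMeasure hp hp₁, aeval_def, eval₂_eq_sum, Polynomial.sum,
    Complex.real_smul, Complex.ofReal_inv, div_eq_inv_mul]
  congr 1
  refine Finset.sum_congr rfl fun k _ => ?_
  rw [Complex.real_smul, Complex.coe_algebraMap, ← Complex.exp_nat_mul, Complex.ofReal_natCast,
    mul_comm z]

theorem tsum_mul_coeff_div_tsum_coeff (hp : ∀ k, 0 ≤ p.coeff k) (hp₁ : 0 < p.eval 1) (f : ℕ → ℝ) :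
    (∑' k, f k * p.coeff k) / ∑' k, p.coeff k = ∫ k, f k ∂coeffMeasure p := by
  have htsum (f : ℕ → ℝ) : ∑' k, f k * p.coeff k = ∑ k ∈ p.support, f k * p.coeff k :=
    tsum_eq_sum fun k hk => by rw [notMem_support_iff.1 hk, mul_zero]
  have hone := htsum 1
  simp only [Pi.one_apply, one_mul] at hone
  rw [integral_coeffMeasure hp hp₁, htsum, hone, eval_eq_sum, div_eq_inv_mul]
  simp [Polynomial.sum, mul_comm]

end CoeffMeasure

/-! ### Positive roots of type `B` -/

section TypeB

open Finset
open scoped PowerSeries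

/-- The weight `ε_{i+1} = α_{i+1} + ⋯ + α_r` in simple-root coordinates, where `α_1, …, α_r` are the
simple roots; it vanishes for `r ≤ i`. The positive roots are the `ε_i`, `ε_i - ε_j` and
`ε_i + ε_j` with `i < j`. -/
def epsB (r i : ℕ) : Fin r → ℕ := fun t => if i ≤ t then 1 else 0

variable {r i j k : ℕ}

@[simp]
theorem epsB_apply (r i : ℕ) (t : Fin r) : epsB r i t = if i ≤ t then 1 else 0 := rfl

theorem epsB_self (r : ℕ) : epsB r r = 0 := by
  ext t
  simp

theorem thetaB_eq (r : ℕ) : thetaB r = epsB r 0 + epsB r 1 := by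
  ext t
  simp only [thetaB, Pi.add_apply, epsB_apply]
  grind

/-- The positive roots whose first nonzero coordinate is the `i`-th (counted from `0`); `ε_{i+1}`
itself is listed as `epsB r i - epsB r r`. -/
def leadingRootsB (r i : ℕ) : Finset (Fin r → ℕ) :=
  (Ioc i r).image (fun k => epsB r i - epsB r k) ∪ (Ioo i r).image (fun k => epsB r i + epsB r k)

/-- The positive roots of `B_r`, as a finite set. -/
def positiveRootsB (r : ℕ) : Finset (Fin r → ℕ) := (range r).biUnion (leadingRootsB r)

theorem mem_positiveRootsB {v : Fin r → ℕ} : v ∈ positiveRootsB r ↔ isPosRootB r v := by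
  have hsub (i k : ℕ) : epsB r i - epsB r k =
      fun t : Fin r => if i + 1 ≤ t.val + 1 ∧ t.val + 1 ≤ k then 1 else 0 := by
    ext t
    simp only [Pi.sub_apply, epsB_apply]
    grind
  have hadd {i k : ℕ} (h : i < k) : epsB r i + epsB r k = fun t : Fin r =>
      if i + 1 ≤ t.val + 1 ∧ t.val + 1 ≤ k + 1 - 1 then 1
      else if k + 1 ≤ t.val + 1 then 2 else 0 := by
    ext t
    simp only [Pi.add_apply, epsB_apply]
    grind
  simp only [positiveRootsB, leadingRootsB, mem_biUnion, mem_union, mem_image, mem_Ioc, mem_Ioo,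
    mem_range, isPosRootB]
  constructor
  · rintro ⟨i, _, ⟨k, hk, rfl⟩ | ⟨k, hk, rfl⟩⟩
    · exact .inl ⟨i + 1, k, by lia, by lia, by lia, hsub i k⟩
    · exact .inr ⟨i + 1, k + 1, by lia, by lia, by lia, hadd hk.1⟩
  · rintro (⟨i, k, hi, hik, hk, rfl⟩ | ⟨i, k, hi, hik, hk, rfl⟩)
    · obtain ⟨i, rfl⟩ := Nat.exists_eq_add_of_le' hi
      exact ⟨i, by lia, .inl ⟨k, by lia, hsub i k⟩⟩
    · obtain ⟨i, rfl⟩ := Nat.exists_eq_add_of_le' hi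
      obtain ⟨k, rfl⟩ := Nat.exists_eq_add_of_le' (show 1 ≤ k by lia)
      exact ⟨i, by lia, .inr ⟨k, by lia, hadd (by lia)⟩⟩

theorem NB_eq_card_decompositions (r k : ℕ) (lam : Fin r → ℕ) :
    NB r k lam = #(decompositions (positiveRootsB r) k lam) := by
  rw [NB, ← Set.ncard_coe_finset]
  congr 1
  ext m
  have hsupp : (∀ v ∈ m.support, isPosRootB r v) ↔ m.support ⊆ positiveRootsB r := by
    simp only [subset_iff, mem_positiveRootsB]
  simp only [Set.mem_ofPred_eq, mem_coe, mem_decompositions, hsupp, Finsupp.linearCombination_apply,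
    id_eq]
  constructor
  · rintro ⟨hS, rfl, hlam⟩
    exact ⟨⟨(Finsupp.sum_of_support_subset m hS (fun _ n => n) fun _ _ => rfl).symm, hS⟩, hlam⟩
  · rintro ⟨⟨rfl, hS⟩, hlam⟩
    exact ⟨hS, Finsupp.sum_of_support_subset m hS _ fun _ _ => rfl, hlam⟩

theorem sub_mem_positiveRootsB (hij : i < j) (hj : j ≤ r) :
    epsB r i - epsB r j ∈ positiveRootsB r := by
  simp only [positiveRootsB, leadingRootsB, mem_biUnion, mem_union, mem_image, mem_Ioc, mem_range]
  exact ⟨i, by lia, .inl ⟨j, by lia, rfl⟩⟩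

theorem add_mem_positiveRootsB (hij : i < j) (hj : j < r) :
    epsB r i + epsB r j ∈ positiveRootsB r := by
  simp only [positiveRootsB, leadingRootsB, mem_biUnion, mem_union, mem_image, mem_Ioo, mem_range]
  exact ⟨i, by lia, .inr ⟨j, by lia, rfl⟩⟩

theorem sum_leadingRootsB {M : Type*} [AddCommMonoid M] (f : (Fin r → ℕ) → M) :
    ∑ a ∈ leadingRootsB r i, f a =
      ∑ k ∈ Ioc i r, f (epsB r i - epsB r k) + ∑ k ∈ Ioo i r, f (epsB r i + epsB r k) := by
  rw [leadingRootsB, sum_union, sum_image, sum_image]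
  · intro a ha b hb hab
    simp only [coe_Ioo, Set.mem_Ioo] at ha hb
    have h₁ := congr_fun hab ⟨a, ha.2⟩
    have h₂ := congr_fun hab ⟨b, hb.2⟩
    simp only [Pi.add_apply, epsB_apply] at h₁ h₂
    grind
  · intro a ha b hb hab
    simp only [coe_Ioc, Set.mem_Ioc] at ha hb
    by_contra hne
    have h := congr_fun hab ⟨min a b, by lia⟩
    simp only [Pi.sub_apply, epsB_apply] at h
    grind
  · rw [disjoint_left]
    simp only [mem_image, mem_Ioc, mem_Ioo]
    rintro _ ⟨a, _, rfl⟩ ⟨b, hb, hab⟩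
    have h := congr_fun hab ⟨b, hb.2⟩
    simp only [Pi.sub_apply, Pi.add_apply, epsB_apply] at h
    grind

theorem apply_of_mem_leadingRootsB {a : Fin r → ℕ} (ha : a ∈ leadingRootsB r i) {t : Fin r}
    (ht : t ≤ i) : a t = if t.val = i then 1 else 0 := by
  simp only [leadingRootsB, mem_union, mem_image, mem_Ioc, mem_Ioo] at ha
  obtain ⟨k, hk, rfl⟩ | ⟨k, hk, rfl⟩ := ha <;>
    simp only [Pi.sub_apply, Pi.add_apply, epsB_apply] <;> grind

theorem sum_apply_ne_zero_of_mem_positiveRootsB {a : Fin r → ℕ} (ha : a ∈ positiveRootsB r) :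
    ∑ t, a t ≠ 0 := by
  obtain ⟨i, hi, hai⟩ := mem_biUnion.1 ha
  have hlead : a ⟨i, mem_range.1 hi⟩ = 1 := by simp [apply_of_mem_leadingRootsB hai]
  exact fun h => by simp [sum_eq_zero_iff.1 h] at hlead

theorem apply_nsmul_kostantSeries {lam : Fin r → ℕ} (hi : i < r)
    (hlam : ∀ t : Fin r, t < i → lam t = 0) :
    lam ⟨i, hi⟩ • kostantSeries (positiveRootsB r) lam =
      ∑ k ∈ Ioc i r, multiplicitySeries (positiveRootsB r) (epsB r i - epsB r k) lam +
      ∑ k ∈ Ioo i r, multiplicitySeries (positiveRootsB r) (epsB r i + epsB r k) lam := by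
  have hsub : leadingRootsB r i ⊆ positiveRootsB r :=
    subset_biUnion_of_mem (leadingRootsB r) (mem_range.2 hi)
  rw [← sum_leadingRootsB (multiplicitySeries (positiveRootsB r) · lam)]
  refine (nsmul_kostantSeries (Pi.evalAddMonoidHom (fun _ : Fin r => ℕ) ⟨i, hi⟩)).trans ?_
  rw [← sum_subset hsub]
  · refine sum_congr rfl fun a ha => ?_
    simp [apply_of_mem_leadingRootsB ha]
  · intro a ha hai
    obtain ⟨l, hl, hal⟩ := mem_biUnion.1 ha
    rcases lt_trichotomy l i with hli | rfl | hil
    · rw [multiplicitySeries_eq_zero, smul_zero]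
      rintro mu rfl
      have := apply_of_mem_leadingRootsB hal (t := ⟨l, mem_range.1 hl⟩) le_rfl
      simpa [this] using hlam ⟨l, mem_range.1 hl⟩ hli
    · contradiction
    · simp [apply_of_mem_leadingRootsB hal (t := ⟨i, hi⟩) hil.le, hil.ne]

/-- The generating function of the decompositions of `ε_{i+1} + ε_{j+1}` into positive roots. -/
noncomputable def kostantAdd (r i j : ℕ) : ℝ⟦X⟧ :=
  kostantSeries (positiveRootsB r) (epsB r i + epsB r j)

/-- The generating function of the decompositions of `ε_{i+1} - ε_{j+1}` into positive roots. -/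
noncomputable def kostantSub (r i j : ℕ) : ℝ⟦X⟧ :=
  kostantSeries (positiveRootsB r) (epsB r i - epsB r j)

theorem kostantSub_self : kostantSub r i i = 1 := by
  rw [kostantSub, tsub_self]
  exact kostantSeries_zero (f := ∑ t, Pi.evalAddMonoidHom (fun _ : Fin r => ℕ) t) fun a ha => by
    simpa using sum_apply_ne_zero_of_mem_positiveRootsB ha

theorem kostantAdd_comm : kostantAdd r i j = kostantAdd r j i := by
  rw [kostantAdd, kostantAdd, add_comm]

theorem kostantAdd_right_self : kostantAdd r i r = kostantSub r i r := by
  simp [kostantAdd, kostantSub, epsB_self]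

theorem kostantSub_eq (hij : i < j) (hj : j ≤ r) :
    kostantSub r i j = PowerSeries.X * ∑ k ∈ Ioc i j, kostantSub r k j := by
  have hi : i < r := by lia
  have hlead := apply_nsmul_kostantSeries (lam := epsB r i - epsB r j) hi fun t ht => by
    simp only [Pi.sub_apply, epsB_apply]; lia
  have hone : (epsB r i - epsB r j) ⟨i, hi⟩ = 1 := by
    simp only [Pi.sub_apply, epsB_apply]; grind
  have hsub : ∀ k ∈ Ioc i r, multiplicitySeries (positiveRootsB r) (epsB r i - epsB r k)
      (epsB r i - epsB r j) = if k ≤ j then PowerSeries.X * kostantSub r k j else 0 := by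
    intro k hk
    rw [mem_Ioc] at hk
    split_ifs with hkj
    · refine multiplicitySeries_of_add_eq (sub_mem_positiveRootsB hk.1 hk.2) ?_ ⟨i, hi⟩ ?_
      · ext t
        simp only [Pi.add_apply, Pi.sub_apply, epsB_apply]; grind
      · simp only [Pi.sub_apply, epsB_apply]; grind
    · refine multiplicitySeries_eq_zero_of_lt ⟨j, by lia⟩ ?_
      simp only [Pi.sub_apply, epsB_apply]; grind
  have hadd : ∀ k ∈ Ioo i r, multiplicitySeries (positiveRootsB r) (epsB r i + epsB r k)
      (epsB r i - epsB r j) = 0 := by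
    intro k hk
    rw [mem_Ioo] at hk
    refine multiplicitySeries_eq_zero_of_lt ⟨k, hk.2⟩ ?_
    simp only [Pi.add_apply, Pi.sub_apply, epsB_apply]; grind
  rw [hone, one_smul, sum_congr rfl hsub, sum_eq_zero hadd, add_zero, ← sum_filter] at hlead
  rw [kostantSub, hlead, mul_sum]
  refine sum_congr ?_ fun _ _ => rfl
  ext k
  simp only [mem_filter, mem_Ioc]; lia

theorem kostantAdd_eq_of_lt (hij : i < j) (hj : j ≤ r) :
    kostantAdd r i j = PowerSeries.X *
      (∑ k ∈ Ioc i r, kostantAdd r k j + ∑ k ∈ Ico j r, kostantSub r j k) := by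
  have hi : i < r := by lia
  have hlead := apply_nsmul_kostantSeries (lam := epsB r i + epsB r j) hi fun t ht => by
    simp only [Pi.add_apply, epsB_apply]; lia
  have hone : (epsB r i + epsB r j) ⟨i, hi⟩ = 1 := by
    simp only [Pi.add_apply, epsB_apply]; grind
  have hsub : ∀ k ∈ Ioc i r, multiplicitySeries (positiveRootsB r) (epsB r i - epsB r k)
      (epsB r i + epsB r j) = PowerSeries.X * kostantAdd r k j := by
    intro k hk
    rw [mem_Ioc] at hk
    refine multiplicitySeries_of_add_eq (sub_mem_positiveRootsB hk.1 hk.2) ?_ ⟨i, hi⟩ ?_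
    · ext t
      simp only [Pi.add_apply, Pi.sub_apply, epsB_apply]; grind
    · simp only [Pi.add_apply, Pi.sub_apply, epsB_apply]; grind
  have hadd : ∀ k ∈ Ioo i r, multiplicitySeries (positiveRootsB r) (epsB r i + epsB r k)
      (epsB r i + epsB r j) = if j ≤ k then PowerSeries.X * kostantSub r j k else 0 := by
    intro k hk
    rw [mem_Ioo] at hk
    split_ifs with hjk
    · refine multiplicitySeries_of_add_eq (add_mem_positiveRootsB hk.1 hk.2) ?_ ⟨i, hi⟩ ?_
      · ext t
        simp only [Pi.add_apply, Pi.sub_apply, epsB_apply]; grind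
      · simp only [Pi.add_apply, Pi.sub_apply, epsB_apply]; grind
    · refine multiplicitySeries_eq_zero_of_lt ⟨k, hk.2⟩ ?_
      simp only [Pi.add_apply, epsB_apply]; grind
  have hIco : {k ∈ Ioo i r | j ≤ k} = Ico j r := by
    ext k
    simp only [mem_filter, mem_Ioo, mem_Ico]; lia
  rw [hone, one_smul, sum_congr rfl hsub, sum_congr rfl hadd, ← sum_filter, hIco] at hlead
  rw [kostantAdd, hlead, mul_add, mul_sum, mul_sum]

theorem two_nsmul_kostantAdd_self (hi : i < r) :
    2 • kostantAdd r i i = PowerSeries.X *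
      (∑ k ∈ Ioc i r, (kostantAdd r k i + PowerSeries.X * kostantAdd r k k) +
        ∑ k ∈ Ioo i r, kostantSub r i k) := by
  have hlead := apply_nsmul_kostantSeries (lam := epsB r i + epsB r i) hi fun t ht => by
    simp only [Pi.add_apply, epsB_apply]; lia
  have htwo : (epsB r i + epsB r i) ⟨i, hi⟩ = 2 := by
    simp only [Pi.add_apply, epsB_apply]; grind
  have hsub : ∀ k ∈ Ioc i r, multiplicitySeries (positiveRootsB r) (epsB r i - epsB r k)
      (epsB r i + epsB r i) =
        PowerSeries.X * (kostantAdd r k i + PowerSeries.X * kostantAdd r k k) := by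
    intro k hk
    rw [mem_Ioc] at hk
    have hmem := sub_mem_positiveRootsB hk.1 hk.2
    have hadd₁ : epsB r k + epsB r i + (epsB r i - epsB r k) = epsB r i + epsB r i := by
      ext t
      simp only [Pi.add_apply, Pi.sub_apply, epsB_apply]; grind
    have hadd₂ : epsB r k + epsB r k + (epsB r i - epsB r k) = epsB r k + epsB r i := by
      ext t
      simp only [Pi.add_apply, Pi.sub_apply, epsB_apply]; grind
    rw [← hadd₁, multiplicitySeries_add_self hmem,
      multiplicitySeries_of_add_eq hmem hadd₂ ⟨i, hi⟩ (by
        simp only [Pi.add_apply, Pi.sub_apply, epsB_apply]; grind)]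
    rfl
  have hadd : ∀ k ∈ Ioo i r, multiplicitySeries (positiveRootsB r) (epsB r i + epsB r k)
      (epsB r i + epsB r i) = PowerSeries.X * kostantSub r i k := by
    intro k hk
    rw [mem_Ioo] at hk
    refine multiplicitySeries_of_add_eq (add_mem_positiveRootsB hk.1 hk.2) ?_ ⟨k, hk.2⟩ ?_
    · ext t
      simp only [Pi.add_apply, Pi.sub_apply, epsB_apply]; grind
    · simp only [Pi.add_apply, Pi.sub_apply, epsB_apply]; grind
  rw [htwo, sum_congr rfl hsub, sum_congr rfl hadd, ← mul_sum, ← mul_sum, ← mul_add] at hlead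
  exact hlead

theorem sum_Ioc_eq_add_sum_Ioc_succ {M : Type*} [AddCommMonoid M] (f : ℕ → M) (h : i < j) :
    ∑ k ∈ Ioc i j, f k = f (i + 1) + ∑ k ∈ Ioc (i + 1) j, f k := by
  rw [← sum_Ioc_consecutive f i.le_succ h, Nat.Ioc_succ_singleton, sum_singleton]

theorem kostantSub_succ (hi : i < r) : kostantSub r i (i + 1) = PowerSeries.X := by
  rw [kostantSub_eq i.lt_succ_self hi, Nat.Ioc_succ_singleton, sum_singleton, kostantSub_self,
    mul_one]

theorem kostantSub_eq_succ (hij : i + 1 < j) (hj : j ≤ r) :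
    kostantSub r i j = (1 + PowerSeries.X) * kostantSub r (i + 1) j := by
  rw [kostantSub_eq (by lia) hj, sum_Ioc_eq_add_sum_Ioc_succ _ (by lia), mul_add,
    ← kostantSub_eq hij hj]
  ring

theorem kostantAdd_eq_succ (hij : i + 1 < j) (hj : j ≤ r) :
    kostantAdd r i j = (1 + PowerSeries.X) * kostantAdd r (i + 1) j := by
  rw [kostantAdd_eq_of_lt (by lia) hj, sum_Ioc_eq_add_sum_Ioc_succ _ (by lia), add_assoc, mul_add,
    ← kostantAdd_eq_of_lt hij hj]
  ring

/-- The sum of the generating functions of all weights `ε_{i+1} ± ε_{k+1}` with `i < k < r`, of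
`ε_{i+1}` and of `0`; it closes the recursions for `kostantAdd`. -/
noncomputable def kostantRowSum (r i : ℕ) : ℝ⟦X⟧ :=
  ∑ k ∈ Ioc i r, kostantAdd r k i + ∑ k ∈ Ico i r, kostantSub r i k

theorem kostantRowSum_eq (hi : i + 1 < r) :
    kostantRowSum r i = kostantAdd r i (i + 1) + (1 + PowerSeries.X) * kostantRowSum r (i + 1) := by
  have hadd : ∑ k ∈ Ioc (i + 1) r, kostantAdd r k i =
      (1 + PowerSeries.X) * ∑ k ∈ Ioc (i + 1) r, kostantAdd r k (i + 1) := by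
    rw [mul_sum]
    refine sum_congr rfl fun k hk => ?_
    rw [mem_Ioc] at hk
    rw [kostantAdd_comm, kostantAdd_eq_succ hk.1 hk.2, kostantAdd_comm]
  have hsub : ∑ k ∈ Ico (i + 2) r, kostantSub r i k =
      (1 + PowerSeries.X) * ∑ k ∈ Ico (i + 2) r, kostantSub r (i + 1) k := by
    rw [mul_sum]
    refine sum_congr rfl fun k hk => ?_
    rw [mem_Ico] at hk
    exact kostantSub_eq_succ hk.1 hk.2.le
  rw [kostantRowSum, kostantRowSum, sum_Ioc_eq_add_sum_Ioc_succ _ (by lia), hadd,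
    sum_eq_sum_Ico_succ_bot (by lia), sum_eq_sum_Ico_succ_bot (by lia), hsub,
    sum_eq_sum_Ico_succ_bot hi, kostantSub_self, kostantSub_self, kostantSub_succ (by lia),
    kostantAdd_comm]
  ring

theorem kostantAdd_succ_eq_rowSum (hi : i < r) :
    kostantAdd r i (i + 1) =
      PowerSeries.X * (kostantAdd r (i + 1) (i + 1) + kostantRowSum r (i + 1)) := by
  rw [kostantAdd_eq_of_lt i.lt_succ_self hi, sum_Ioc_eq_add_sum_Ioc_succ _ hi, kostantRowSum,
    add_assoc]

theorem two_mul_kostantAdd_self (hi : i < r) :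
    2 * kostantAdd r i i = PowerSeries.X * (kostantRowSum r i - 1) +
      PowerSeries.X ^ 2 * ∑ k ∈ Ioc i r, kostantAdd r k k := by
  have h := two_nsmul_kostantAdd_self hi
  rw [sum_add_distrib, ← mul_sum, two_nsmul] at h
  rw [two_mul, h, kostantRowSum, ← add_sum_Ioo_eq_sum_Ico hi, kostantSub_self]
  ring

theorem kostantAdd_self_eq (hi : i + 1 < r) :
    kostantAdd r i i = kostantAdd r (i + 1) (i + 1) + PowerSeries.X * kostantAdd r i (i + 1) := by
  have h₀ := two_mul_kostantAdd_self (show i < r by lia)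
  have h₁ := two_mul_kostantAdd_self hi
  rw [sum_Ioc_eq_add_sum_Ioc_succ _ (by lia)] at h₀
  have hrow := kostantRowSum_eq hi
  have hadj := kostantAdd_succ_eq_rowSum (show i < r by lia)
  have : CharZero ℝ⟦X⟧ := algebraRat.charZero _
  refine mul_left_cancel₀ (two_ne_zero (α := ℝ⟦X⟧)) ?_
  linear_combination h₀ - h₁ + PowerSeries.X * hrow - PowerSeries.X * hadj

theorem kostantAdd_succ_eq (hi : i + 2 < r) :
    kostantAdd r i (i + 1) = (1 + PowerSeries.X) ^ 2 * kostantAdd r (i + 1) (i + 2) -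
      PowerSeries.X ^ 2 * kostantAdd r (i + 2) (i + 2) := by
  have hadj₀ := kostantAdd_succ_eq_rowSum (show i < r by lia)
  have hadj₁ := kostantAdd_succ_eq_rowSum (show i + 1 < r by lia)
  have hrow := kostantRowSum_eq (show (i + 1) + 1 < r by lia)
  have hself := kostantAdd_self_eq (show (i + 1) + 1 < r by lia)
  linear_combination hadj₀ + PowerSeries.X * hrow - (1 + PowerSeries.X) * hadj₁ +
    PowerSeries.X * hself

theorem kostantAdd_self_of_add_one_eq (h : i + 1 = r) : kostantAdd r i i = PowerSeries.X ^ 2 := by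
  have : CharZero ℝ⟦X⟧ := algebraRat.charZero _
  subst h
  refine mul_left_cancel₀ (two_ne_zero (α := ℝ⟦X⟧)) ?_
  rw [two_mul_kostantAdd_self i.lt_succ_self]
  simp only [kostantRowSum, Nat.succ_eq_add_one, Nat.Ioc_succ_singleton, Nat.Ico_succ_singleton,
    sum_singleton, kostantAdd_comm (i := i + 1), kostantAdd_right_self, kostantSub_self,
    kostantSub_succ i.lt_succ_self]
  ring

theorem kostantAdd_succ_of_add_two_eq (h : i + 2 = r) :
    kostantAdd r i (i + 1) = PowerSeries.X + PowerSeries.X ^ 2 + PowerSeries.X ^ 3 := by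
  rw [kostantAdd_succ_eq_rowSum (by lia), kostantAdd_self_of_add_one_eq (by lia)]
  subst h
  simp only [kostantRowSum, Nat.Ioc_succ_singleton, Nat.Ico_succ_singleton, sum_singleton,
    kostantAdd_comm (i := i + 2), kostantAdd_right_self, kostantSub_self,
    kostantSub_succ (i + 1).lt_succ_self]
  ring

/-- The generating polynomial `∑ k, p_{n+2,k} X ^ k` of the decompositions of the highest root of
`B_{n+2}`, defined by its linear recurrence; see `pB_add_two`. -/
noncomputable def highestRootPolyB : ℕ → ℝ[X]
  | 0 => X + X ^ 2 + X ^ 3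
  | 1 => (1 + X) ^ 2 * (X + X ^ 2 + X ^ 3) - X ^ 4
  | n + 2 => (1 + (1 + X) ^ 2) * highestRootPolyB (n + 1) -
      ((1 + X) ^ 2 + X ^ 3) * highestRootPolyB n

theorem kostantAdd_succ_eq_coe (n : ℕ) (h : i + n + 2 = r) :
    kostantAdd r i (i + 1) = (highestRootPolyB n : ℝ⟦X⟧) := by
  induction n using Nat.twoStepInduction generalizing i with
  | zero =>
    rw [kostantAdd_succ_of_add_two_eq h]
    simp [highestRootPolyB]
  | one =>
    rw [kostantAdd_succ_eq (by lia), kostantAdd_self_of_add_one_eq (by lia),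
      kostantAdd_succ_of_add_two_eq (by lia)]
    simp only [highestRootPolyB, Polynomial.coe_sub, Polynomial.coe_mul, Polynomial.coe_pow,
      Polynomial.coe_add, Polynomial.coe_one, Polynomial.coe_X]
    ring
  | more n ih₀ ih₁ =>
    have h₀ := kostantAdd_succ_eq (r := r) (i := i) (by lia)
    have h₁ := kostantAdd_succ_eq (r := r) (i := i + 1) (by lia)
    have hself := kostantAdd_self_eq (r := r) (i := i + 2) (by lia)
    simp only [ih₁ (i := i + 1) (by lia), ih₀ (i := i + 2) (by lia)] at h₀ h₁ hself
    simp only [highestRootPolyB, Polynomial.coe_add, Polynomial.coe_sub, Polynomial.coe_mul,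
      Polynomial.coe_pow, Polynomial.coe_one, Polynomial.coe_X]
    linear_combination h₀ - h₁ - PowerSeries.X ^ 2 * hself

theorem pB_add_two (n k : ℕ) : pB (n + 2) k = (highestRootPolyB n).coeff k := by
  rw [← Polynomial.coeff_coe, ← kostantAdd_succ_eq_coe (r := n + 2) (i := 0) n (by lia), pB,
    NB_eq_card_decompositions, thetaB_eq, kostantAdd, kostantSeries, PowerSeries.coeff_mk]

end TypeB

/-! ### The dominant characteristic root -/

section DominantRoot

open Filter Topology

theorem sub_mul_eq_pow_of_linear_recurrence {R : Type*} [CommRing R] {a : ℕ → R} {lam mu : R}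
    (h : ∀ n, a (n + 2) = (lam + mu) * a (n + 1) - lam * mu * a n) (n : ℕ) :
    (lam - mu) * a n = (a 1 - mu * a 0) * lam ^ n - (a 1 - lam * a 0) * mu ^ n := by
  induction n using Nat.twoStepInduction with
  | zero => ring
  | one => ring
  | more n ih₀ ih₁ =>
    rw [h]
    linear_combination (lam + mu) * ih₁ - lam * mu * ih₀

/-- For `s ^ 2 = q ^ 2 + 4`, one of the two roots of the characteristic polynomial
`Y ^ 2 - (1 + (1 + q) ^ 2) * Y + ((1 + q) ^ 2 + q ^ 3)` of the recurrence satisfied by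
`aeval q (highestRootPolyB n)`; the other one is obtained by changing the sign of `s`. -/
noncomputable def charRootB (q s : ℂ) : ℂ := (1 + (1 + q) ^ 2 + q * s) / 2

/-- The coefficient of `charRootB q s ^ n` in the Binet formula for
`aeval q (highestRootPolyB n)`. -/
noncomputable def amplitudeB (q s : ℂ) : ℂ :=
  (aeval q (highestRootPolyB 1) - charRootB q (-s) * aeval q (highestRootPolyB 0)) / (q * s)

theorem aeval_highestRootPolyB {q s : ℂ} (hq : q ≠ 0) (hs : s ≠ 0) (hsq : s ^ 2 = q ^ 2 + 4)
    (n : ℕ) :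
    aeval q (highestRootPolyB n) =
      amplitudeB q s * charRootB q s ^ n + amplitudeB q (-s) * charRootB q (-s) ^ n := by
  have hrec (n : ℕ) : aeval q (highestRootPolyB (n + 2)) =
      (charRootB q s + charRootB q (-s)) * aeval q (highestRootPolyB (n + 1)) -
        charRootB q s * charRootB q (-s) * aeval q (highestRootPolyB n) := by
    simp only [highestRootPolyB, charRootB, map_sub, map_mul, map_add, map_pow, map_one, aeval_X]
    linear_combination -q ^ 2 / 4 * aeval q (highestRootPolyB n) * hsq
  have hbinet := sub_mul_eq_pow_of_linear_recurrence
    (a := fun n => aeval q (highestRootPolyB n)) hrec n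
  rw [show charRootB q s - charRootB q (-s) = q * s by simp only [charRootB]; ring] at hbinet
  rw [amplitudeB, amplitudeB, neg_neg, mul_neg, div_neg, ← mul_right_inj' (mul_ne_zero hq hs),
    hbinet]
  field_simp
  ring

theorem eval_one_highestRootPolyB_pos_and_two_mul_le (n : ℕ) :
    0 < (highestRootPolyB n).eval 1 ∧
      2 * (highestRootPolyB n).eval 1 ≤ (highestRootPolyB (n + 1)).eval 1 := by
  induction n with
  | zero => norm_num [highestRootPolyB]
  | succ n ih =>
    have hrec : (highestRootPolyB (n + 2)).eval 1 =
        5 * (highestRootPolyB (n + 1)).eval 1 - 5 * (highestRootPolyB n).eval 1 := by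
      simp only [highestRootPolyB, eval_sub, eval_mul, eval_add, eval_pow, eval_one, eval_X]
      ring
    constructor <;> linarith

theorem eval_one_highestRootPolyB_pos (n : ℕ) : 0 < (highestRootPolyB n).eval 1 :=
  (eval_one_highestRootPolyB_pos_and_two_mul_le n).1

/-- The branch of `√(q ^ 2 + 4)` at `q = exp z`, analytic near `z = 0`. -/
noncomputable def discrRootB (z : ℂ) : ℂ := Complex.sqrt (Complex.exp z ^ 2 + 4)

theorem discrRootB_sq (z : ℂ) : discrRootB z ^ 2 = Complex.exp z ^ 2 + 4 := by
  have := Complex.cpow_nat_inv_pow (Complex.exp z ^ 2 + 4) two_ne_zero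
  exact_mod_cast this

theorem discrRootB_zero : discrRootB 0 = √5 := by
  have h : Complex.exp 0 ^ 2 + 4 = ((5 : ℝ) : ℂ) := by norm_num
  rw [discrRootB, h, Complex.sqrt_of_nonneg (by exact_mod_cast show (0 : ℝ) ≤ 5 by norm_num),
    Complex.ofReal_re]

theorem discrRootB_zero_ne_zero : discrRootB 0 ≠ 0 := by
  rw [discrRootB_zero, Complex.ofReal_ne_zero]
  positivity

theorem analyticAt_discrRootB : AnalyticAt ℂ discrRootB 0 := by
  refine Complex.analyticAt_iff_eventually_differentiableAt.2 ?_
  have hcont : ContinuousAt (fun z => Complex.exp z ^ 2 + 4) 0 := by fun_prop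
  have hslit : Complex.exp 0 ^ 2 + 4 ∈ Complex.slitPlane := by
    refine Complex.mem_slitPlane_iff.2 (.inl ?_)
    norm_num
  filter_upwards [hcont.preimage_mem_nhds (Complex.isOpen_slitPlane.mem_nhds hslit)] with z hz
  exact (Complex.differentiableAt_sqrt hz).comp z (by fun_prop)

theorem eventually_hasDerivAt_discrRootB :
    ∀ᶠ z in 𝓝 0, HasDerivAt discrRootB (Complex.exp z ^ 2 / discrRootB z) z := by
  filter_upwards [analyticAt_discrRootB.eventually_analyticAt,
    analyticAt_discrRootB.continuousAt.eventually_ne discrRootB_zero_ne_zero] with z hz hz₀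
  have hsq := hz.differentiableAt.hasDerivAt.fun_pow 2
  simp only [discrRootB_sq] at hsq
  have := hsq.unique (((Complex.hasDerivAt_exp z).fun_pow 2).add_const 4)
  refine hz.differentiableAt.hasDerivAt.congr_deriv ((eq_div_iff hz₀).2 ?_)
  linear_combination this / 2

theorem eventually_hasDerivAt_charRootB :
    ∀ᶠ z in 𝓝 0, HasDerivAt (fun z => charRootB (Complex.exp z) (discrRootB z))
      (Complex.exp z * (1 + Complex.exp z + discrRootB z / 2 +
        Complex.exp z ^ 2 / (2 * discrRootB z))) z := by
  filter_upwards [eventually_hasDerivAt_discrRootB] with z hz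
  have hexp := Complex.hasDerivAt_exp z
  refine ((((hexp.const_add 1).fun_pow 2).const_add 1).add (hexp.mul hz)).div_const 2 |>.congr_deriv
    ?_
  ring

theorem charRootB_discrRootB_zero (ε : ℝ) :
    charRootB (Complex.exp 0) (ε * discrRootB 0) = ((5 + ε * √5) / 2 : ℝ) := by
  rw [charRootB, discrRootB_zero]
  push_cast
  norm_num

theorem deriv_logDeriv_charRootB :
    deriv (logDeriv fun z => charRootB (Complex.exp z) (discrRootB z)) 0 =
      ((13 / 25 : ℝ) : ℂ) := by
  have hexp := Complex.hasDerivAt_exp 0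
  have hs := eventually_hasDerivAt_discrRootB.self_of_nhds
  have hs₀ := discrRootB_zero_ne_zero
  have hsq := discrRootB_sq 0
  have hroot : charRootB (Complex.exp 0) (discrRootB 0) ≠ 0 := by
    have h := charRootB_discrRootB_zero 1
    rw [Complex.ofReal_one, one_mul] at h
    rw [h, Complex.ofReal_ne_zero]
    positivity
  have hderiv := hexp.mul ((((hexp.const_add 1).add (hs.div_const 2))).add
    ((hexp.fun_pow 2).div (hs.const_mul 2) (mul_ne_zero two_ne_zero hs₀)))
  rw [deriv_logDeriv_eq eventually_hasDerivAt_charRootB hderiv hroot,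
    div_eq_iff (pow_ne_zero 2 hroot)]
  simp only [charRootB, Complex.exp_zero, Pi.add_apply, Pi.div_apply] at hsq ⊢
  push_cast
  generalize discrRootB 0 = s at *
  field_simp
  linear_combination (25 + 10 * s - 55 * s ^ 2 - 13 * s ^ 3) * hsq

end DominantRoot

section Limit

open Filter Topology MeasureTheory ProbabilityTheory

theorem coeff_highestRootPolyB_nonneg (n k : ℕ) : 0 ≤ (highestRootPolyB n).coeff k := by
  rw [← pB_add_two]
  exact Nat.cast_nonneg _

instance isProbabilityMeasure_coeffMeasure_highestRootPolyB (n : ℕ) :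
    IsProbabilityMeasure (coeffMeasure (highestRootPolyB n)) :=
  isProbabilityMeasure_coeffMeasure (coeff_highestRootPolyB_nonneg n)
    (eval_one_highestRootPolyB_pos n)

theorem analyticAt_charRootB {q s : ℂ → ℂ} {w : ℂ} (hq : AnalyticAt ℂ q w)
    (hs : AnalyticAt ℂ s w) : AnalyticAt ℂ (fun z => charRootB (q z) (s z)) w := by
  unfold charRootB
  fun_prop

theorem analyticAt_amplitudeB {q s : ℂ → ℂ} {w : ℂ} (hq : AnalyticAt ℂ q w)
    (hs : AnalyticAt ℂ s w) (hqs : q w * s w ≠ 0) :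
    AnalyticAt ℂ (fun z => amplitudeB (q z) (s z)) w :=
  ((hq.aeval_polynomial _).sub
    ((analyticAt_charRootB hq hs.neg).mul (hq.aeval_polynomial _))).div (hq.mul hs) hqs

theorem norm_charRootB_neg_lt :
    ‖charRootB (Complex.exp 0) (-discrRootB 0)‖ < ‖charRootB (Complex.exp 0) (discrRootB 0)‖ := by
  have hpos := charRootB_discrRootB_zero 1
  have hneg := charRootB_discrRootB_zero (-1)
  simp only [Complex.ofReal_neg, Complex.ofReal_one, one_mul, neg_mul] at hpos hneg
  rw [hpos, hneg, Complex.norm_real, Complex.norm_real, Real.norm_eq_abs, Real.norm_eq_abs,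
    ← sq_lt_sq]
  nlinarith [Real.sqrt_pos.2 (show (0 : ℝ) < 5 by norm_num)]

theorem amplitudeB_discrRootB_zero_ne_zero :
    amplitudeB (Complex.exp 0) (discrRootB 0) ≠ 0 := by
  have hneg := charRootB_discrRootB_zero (-1)
  simp only [Complex.ofReal_neg, Complex.ofReal_one, neg_mul, one_mul] at hneg
  have hnum : aeval (Complex.exp 0) (highestRootPolyB 1) -
      charRootB (Complex.exp 0) (-discrRootB 0) * aeval (Complex.exp 0) (highestRootPolyB 0) =
        ((7 + 3 * √5) / 2 : ℝ) := by
    rw [hneg, Complex.exp_zero]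
    simp only [highestRootPolyB, map_sub, map_mul, map_add, map_pow, map_one, aeval_X]
    push_cast
    ring
  rw [amplitudeB, hnum]
  exact div_ne_zero (Complex.ofReal_ne_zero.2 (by positivity))
    (mul_ne_zero (Complex.exp_ne_zero 0) discrRootB_zero_ne_zero)

theorem eventually_complexMGF_highestRootPolyB :
    ∀ᶠ z in 𝓝 0, ∀ n, complexMGF (fun k : ℕ => (k : ℝ)) (coeffMeasure (highestRootPolyB n)) z =
      (amplitudeB (Complex.exp z) (discrRootB z) * charRootB (Complex.exp z) (discrRootB z) ^ n +
        amplitudeB (Complex.exp z) (-discrRootB z) *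
          charRootB (Complex.exp z) (-discrRootB z) ^ n) /
      (amplitudeB (Complex.exp 0) (discrRootB 0) * charRootB (Complex.exp 0) (discrRootB 0) ^ n +
        amplitudeB (Complex.exp 0) (-discrRootB 0) *
          charRootB (Complex.exp 0) (-discrRootB 0) ^ n) := by
  filter_upwards [analyticAt_discrRootB.continuousAt.eventually_ne discrRootB_zero_ne_zero]
    with z hz n
  rw [complexMGF_coeffMeasure (coeff_highestRootPolyB_nonneg n) (eval_one_highestRootPolyB_pos n),
    ← aeval_highestRootPolyB (Complex.exp_ne_zero z) hz (discrRootB_sq z),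
    ← aeval_highestRootPolyB (Complex.exp_ne_zero 0) discrRootB_zero_ne_zero (discrRootB_sq 0),
    Complex.exp_zero, ← Complex.ofReal_one, ← Complex.coe_algebraMap,
    aeval_algebraMap_apply_eq_algebraMap_eval]

theorem tendsto_coeffMeasure_highestRootPolyB (x : ℝ) :
    Tendsto (fun n => (coeffMeasure (highestRootPolyB n)).real
        {k : ℕ | (k : ℝ) ≤ ∫ j : ℕ, (j : ℝ) ∂coeffMeasure (highestRootPolyB n) +
          x * √Var[fun j : ℕ => (j : ℝ); coeffMeasure (highestRootPolyB n)]}) atTop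
      (𝓝 (cdf (gaussianReal 0 1) x)) := by
  have hs := analyticAt_discrRootB
  have hqs := mul_ne_zero (Complex.exp_ne_zero 0) discrRootB_zero_ne_zero
  have hqs' := mul_ne_zero (Complex.exp_ne_zero 0) (neg_ne_zero.2 discrRootB_zero_ne_zero)
  exact tendsto_measureReal_le_of_complexMGF_eq_add_pow
    (fun n => zero_mem_interior_integrableExpSet_coeffMeasure _ _)
    (analyticAt_amplitudeB analyticAt_cexp hs hqs)
    (analyticAt_amplitudeB analyticAt_cexp hs.neg hqs')
    (analyticAt_charRootB analyticAt_cexp hs)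
    (analyticAt_charRootB analyticAt_cexp hs.neg)
    norm_charRootB_neg_lt amplitudeB_discrRootB_zero_ne_zero eventually_complexMGF_highestRootPolyB
    (by norm_num) deriv_logDeriv_charRootB x

theorem tsum_mul_pB_div_tsum_pB (n : ℕ) (f : ℕ → ℝ) :
    (∑' k, f k * pB (n + 2) k) / ∑' k, pB (n + 2) k =
      ∫ k, f k ∂coeffMeasure (highestRootPolyB n) := by
  simp only [pB_add_two]
  exact tsum_mul_coeff_div_tsum_coeff (coeff_highestRootPolyB_nonneg n)
    (eval_one_highestRootPolyB_pos n) f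

theorem muB_add_two (n : ℕ) :
    muB (n + 2) = ∫ k : ℕ, (k : ℝ) ∂coeffMeasure (highestRootPolyB n) :=
  tsum_mul_pB_div_tsum_pB n _

theorem varB_add_two (n : ℕ) :
    varB (n + 2) = Var[fun k : ℕ => (k : ℝ); coeffMeasure (highestRootPolyB n)] := by
  rw [variance_eq_sub (memLp_of_mem_interior_integrableExpSet
    (zero_mem_interior_integrableExpSet_coeffMeasure _ _) 2), varB, muB_add_two,
    tsum_mul_pB_div_tsum_pB]
  rfl

theorem tsum_ite_pB_div_tsum_pB (n : ℕ) (a : ℝ) :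
    (∑' k : ℕ, if (k : ℝ) ≤ a then pB (n + 2) k else 0) / ∑' k, pB (n + 2) k =
      (coeffMeasure (highestRootPolyB n)).real {k : ℕ | (k : ℝ) ≤ a} := by
  rw [← integral_indicator_one (Set.to_countable _).measurableSet, ← tsum_mul_pB_div_tsum_pB]
  simp only [Set.indicator_apply, Set.mem_ofPred_eq, Pi.one_apply, ite_mul, one_mul, zero_mul]

end Limit

open Filter in
/-- Theorem 1.2, type `B_r` (Gaussian behavior): the normalized number of positive
roots used in the decompositions of the highest root of `B_r`, with mean `μ_r` and
standard deviation `σ_r = √(variance)`, converges in distribution to the standard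
normal as `r → ∞`. -/
theorem gaussian_highestRoot_typeB (x : ℝ) :
    Tendsto (fun r : ℕ =>
      (∑' k : ℕ, if (k : ℝ) ≤ muB r + x * Real.sqrt (varB r) then pB r k else 0) /
        (∑' k : ℕ, pB r k))
      atTop
      (nhds ((1 / Real.sqrt (2 * Real.pi)) * ∫ u in Set.Iic x, Real.exp (-u ^ 2 / 2))) := by
  rw [← cdf_gaussianReal_zero_one, ← tendsto_add_atTop_iff_nat 2]
  simp only [tsum_ite_pB_div_tsum_pB, muB_add_two, varB_add_two]
  exact tendsto_coeffMeasure_highestRootPolyB x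
end
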